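/- arXiv:1706.01618 — 2 statements merged into one kernel-verified Lean document; each statement's English description precedes it below -/
import Mathlib

section
/- Let p be an odd prime, let d be a positive integer with d > (p−1)/2, and let ρ be a metric on ℝᵈ inducing the standard (Euclidean) topology of ℝᵈ. Then there exist p distinct points x₀, x₁, …, x_{p−1} in ℝᵈ, indexed by 𝔽_p, such that for every t ∈ {1, 2, …, (p−1)/2} the p-gon C_t is ρ-equilateral. -/
/-- `ρ` is a metric on `E` that induces the (given) standard topology of `E`. -/
def IsMetricEquivToStd {E : Type*} [TopologicalSpace E] (ρ : E → E → ℝ) : Prop :=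
  (∀ x y, ρ x y = ρ y x) ∧
  (∀ x y, ρ x y = 0 ↔ x = y) ∧
  (∀ x y z, ρ x z ≤ ρ x y + ρ y z) ∧
  (∀ s : Set E, IsOpen s ↔ ∀ x ∈ s, ∃ ε > 0, {y | ρ x y < ε} ⊆ s)

/-!
Put `f x t k = ρ (x k) (x (k + t))`. A Borsuk–Ulam theorem for the cyclic group of order `p`, acting
by shifts on `p`-tuples of points of `ℝ^(p / 2 + 1)`, gives a nonconstant tuple `x` for which
`f x t k` does not depend on `k`, for each of the `p / 2` values of `t`. If `x k = x (k + t)` for a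
single `k`, then all `f x t k` vanish, so `x` is constant because `t` generates `ZMod p`; hence the
points are distinct.

The Borsuk–Ulam theorem is proved with ordered chains. Coning off cycles inside a simplex on
`ZMod p × κ` produces chains `h i` with `∂ (h (i + 1)) = (T - 1) (h i)` for even `i` and
`∂ (h (i + 1)) = (1 + T + ⋯ + T ^ (p - 1)) (h i)` for odd `i`, an image of the periodic resolution
of the group. Pushed equivariantly to chains on `ZMod p`, they pair to `1` with the periodic
cocycles, which vanish on simplices with equal consecutive vertices. If every nonconstant tuple had
a value of `t` for which `f x t` is not constant, then a fine subdivision would be labelled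
equivariantly by the positions of the large values of each `f x t`; along a flag of faces these
positions form a monotone family of subsets, too few to make all consecutive labels distinct.
-/

namespace BorsukUlam

variable {R α β : Type*}

section Chains

variable (R α) in
/-- Ordered simplicial chains of the full simplex on the vertex set `α`: a list of length `n + 1`
is an `n`-simplex, and the empty list is a simplex of degree `-1`, so the complex is augmented. -/
abbrev Chain [CommRing R] : Type _ := List α →₀ R

variable [CommRing R]

/-- The cone over a chain with apex `a`. -/
noncomputable def cone (a : α) : Chain R α →ₗ[R] Chain R α :=
  Finsupp.lmapDomain R R (List.cons a)

/-- The boundary of a single simplex. -/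
noncomputable def simplexBd : List α → Chain R α
  | [] => 0
  | a :: l => Finsupp.single l 1 - cone a (simplexBd l)

/-- The boundary operator on chains. -/
noncomputable def bd : Chain R α →ₗ[R] Chain R α :=
  Finsupp.linearCombination R simplexBd

/-- The chain map induced by a map of vertices. -/
noncomputable def push (f : α → β) : Chain R α →ₗ[R] Chain R β :=
  Finsupp.lmapDomain R R (List.map f)

/-- The coboundary of a cochain. -/
def cobd (f : List α → R) : List α → R
  | [] => 0
  | a :: l => f l - cobd (fun l' => f (a :: l')) l

@[simp]
lemma cone_single (a : α) (l : List α) (r : R) :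
    cone a (Finsupp.single l r) = Finsupp.single (a :: l) r :=
  Finsupp.mapDomain_single

@[simp]
lemma push_single (f : α → β) (l : List α) (r : R) :
    push f (Finsupp.single l r) = Finsupp.single (l.map f) r :=
  Finsupp.mapDomain_single

@[simp]
lemma bd_single (l : List α) (r : R) : bd (Finsupp.single l r) = r • simplexBd l :=
  Finsupp.linearCombination_single R r l

lemma bd_comp_cone (a : α) : bd ∘ₗ cone a = LinearMap.id - cone a ∘ₗ (bd : Chain R α →ₗ[R] _) := by
  ext l : 2
  simp [simplexBd]

lemma bd_cone (a : α) (c : Chain R α) : bd (cone a c) = c - cone a (bd c) :=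
  LinearMap.congr_fun (bd_comp_cone a) c

lemma bd_simplexBd (l : List α) : bd (simplexBd l : Chain R α) = 0 := by
  induction l with
  | nil => simp [simplexBd]
  | cons a l ih => simp [simplexBd, bd_cone, ih]

lemma push_cone (f : α → β) (a : α) (c : Chain R α) :
    push f (cone a c) = cone (f a) (push f c) := by
  suffices push f ∘ₗ cone a = cone (f a) ∘ₗ (push f : Chain R α →ₗ[R] _) from
    LinearMap.congr_fun this c
  ext l : 2
  simp

lemma push_simplexBd (f : α → β) (l : List α) :
    push f (simplexBd l : Chain R α) = simplexBd (l.map f) := by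
  induction l with
  | nil => simp [simplexBd]
  | cons a l ih => simp [simplexBd, push_cone, ih]

lemma bd_push (f : α → β) (c : Chain R α) : bd (push f c) = push f (bd c) := by
  suffices bd ∘ₗ push f = push f ∘ₗ (bd : Chain R α →ₗ[R] _) from LinearMap.congr_fun this c
  ext l : 2
  simp [push_simplexBd]

lemma push_congr {f g : α → β} {c : Chain R α} (h : ∀ l ∈ c.support, ∀ x ∈ l, f x = g x) :
    push f c = push g c :=
  Finsupp.mapDomain_congr fun l hl => List.map_congr_left (h l hl)

lemma push_push {γ : Type*} (g : β → γ) (f : α → β) (c : Chain R α) :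
    push g (push f c) = push (g ∘ f) c := by
  suffices push g ∘ₗ push f = (push (g ∘ f) : Chain R α →ₗ[R] _) from LinearMap.congr_fun this c
  ext l : 2
  simp

lemma push_pow (f : α → α) (k : ℕ) : (push f : Module.End R (Chain R α)) ^ k = push f^[k] := by
  induction k with
  | zero => ext l : 2; simp [Module.End.one_apply]
  | succ k ih =>
    ext l : 2
    simp [pow_succ, ih, Module.End.mul_apply]

lemma linearCombination_cone (f : List α → R) (a : α) (c : Chain R α) :
    Finsupp.linearCombination R f (cone a c) =
      Finsupp.linearCombination R (fun l => f (a :: l)) c :=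
  Finsupp.linearCombination_mapDomain R (List.cons a) c

lemma linearCombination_simplexBd (f : List α → R) (l : List α) :
    Finsupp.linearCombination R f (simplexBd l) = cobd f l := by
  induction l generalizing f with
  | nil => simp [simplexBd, cobd]
  | cons a l ih => simp [simplexBd, cobd, linearCombination_cone, ih]

lemma linearCombination_bd (f : List α → R) (c : Chain R α) :
    Finsupp.linearCombination R f (bd c) = Finsupp.linearCombination R (cobd f) c := by
  suffices Finsupp.linearCombination R f ∘ₗ bd = Finsupp.linearCombination R (cobd f) from
    LinearMap.congr_fun this c
  ext l : 2
  simp [linearCombination_simplexBd]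

lemma linearCombination_push (f : List β → R) (φ : α → β) (c : Chain R α) :
    Finsupp.linearCombination R f (push φ c) =
      Finsupp.linearCombination R (fun l => f (l.map φ)) c :=
  Finsupp.linearCombination_mapDomain R (List.map φ) c

lemma cobd_mul_left (r : R) (f : List α → R) (l : List α) :
    cobd (fun l => r * f l) l = r * cobd f l := by
  simp only [← linearCombination_simplexBd, Finsupp.linearCombination_apply, Finsupp.sum,
    smul_eq_mul, Finset.mul_sum, mul_left_comm]

lemma linearCombination_mem {ι M : Type*} [AddCommGroup M] [Module R M] {W : Submodule R M}
    {g : ι → M} {c : ι →₀ R} (h : ∀ i ∈ c.support, g i ∈ W) :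
    Finsupp.linearCombination R g c ∈ W :=
  W.sum_mem fun i hi => W.smul_mem _ (h i hi)

lemma lmapDomain_mem_supported {ι ι' : Type*} {f : ι → ι'} {s : Set ι} {t : Set ι'} {c : ι →₀ R}
    (hc : c ∈ Finsupp.supported R R s) (hf : Set.MapsTo f s t) :
    Finsupp.lmapDomain R R f c ∈ Finsupp.supported R R t := by
  have hmem := Submodule.mem_map_of_mem (f := Finsupp.lmapDomain R R f) hc
  rw [Finsupp.lmapDomain_supported] at hmem
  exact Finsupp.supported_mono hf.image_subset hmem

lemma simplexBd_mem_supported (l : List α) :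
    (simplexBd l : Chain R α) ∈
      Finsupp.supported R R {l' | l'.length + 1 = l.length ∧ l'.Sublist l} := by
  induction l with
  | nil => simp [simplexBd]
  | cons a l ih =>
    refine Submodule.sub_mem _ (Finsupp.single_mem_supported R 1 (by simp))
      (lmapDomain_mem_supported ih fun l' hl' => ?_)
    simpa using hl'

end Chains

section Transfer

variable {M M' : Type*} [CommRing R] [AddCommGroup M] [Module R M] [AddCommGroup M'] [Module R M']

/-- The alternating maps `φ - 1` and `1 + φ + ⋯ + φ ^ (p - 1)` of the periodic free resolution of
the cyclic group of order `p`. -/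
def transfer (p : ℕ) (φ : Module.End R M) (i : ℕ) : Module.End R M :=
  if Even i then φ - 1 else ∑ k ∈ Finset.range p, φ ^ k

lemma transfer_succ_mul_transfer {p : ℕ} {φ : Module.End R M} (hφ : φ ^ p = 1) (i : ℕ) :
    transfer p φ (i + 1) * transfer p φ i = 0 := by
  by_cases hi : Even i
  · simp [transfer, Nat.even_add_one, hi, geom_sum_mul, hφ]
  · simp [transfer, Nat.even_add_one, hi, mul_geom_sum, hφ]

lemma transfer_mem {φ : Module.End R M} {W : Submodule R M} (hW : ∀ c ∈ W, φ c ∈ W) (p i : ℕ)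
    {c : M} (hc : c ∈ W) : transfer p φ i c ∈ W := by
  unfold transfer
  split_ifs
  · exact W.sub_mem (hW c hc) hc
  · rw [LinearMap.sum_apply]
    exact W.sum_mem fun k _ => Module.End.pow_apply_mem_of_forall_mem k hW c hc

lemma map_transfer {φ : Module.End R M} {ψ : Module.End R M'} {F : M →ₗ[R] M'} {c : M}
    (hF : ∀ k, F ((φ ^ k) c) = (ψ ^ k) (F c)) (p i : ℕ) :
    F (transfer p φ i c) = transfer p ψ i (F c) := by
  unfold transfer
  split_ifs
  · simpa using hF 1
  · simp [LinearMap.sum_apply, hF]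

end Transfer

section Resolving

variable [CommRing R]

/-- The chains `h 0, …, h N` are the generators of an equivariant image of the periodic free
resolution of the cyclic group of order `p`, whose generator acts on vertices by `T`. -/
structure IsResolving (p : ℕ) (T : α → α) (N : ℕ) (h : ℕ → Chain R α) : Prop where
  homogeneous : ∀ i ≤ N, h i ∈ Finsupp.supported R R {l | l.length = i + 1}
  bd_zero : bd (h 0) = Finsupp.single [] 1
  bd_succ : ∀ i < N, bd (h (i + 1)) = transfer p (push T) i (h i)

variable (R) in
/-- The resolving sequence obtained by coning off each cycle from a prescribed apex. -/
noncomputable def coneSeq (p : ℕ) (T : α → α) (a : ℕ → α) : ℕ → Chain R α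
  | 0 => Finsupp.single [a 0] 1
  | i + 1 => cone (a (i + 1)) (transfer p (push T) i (coneSeq p T a i))

lemma transfer_push_mem_supported {T : α → α} {s : Set (List α)}
    (hs : Set.MapsTo (List.map T) s s) (p i : ℕ) {c : Chain R α}
    (hc : c ∈ Finsupp.supported R R s) :
    transfer p (push T) i c ∈ Finsupp.supported R R s :=
  transfer_mem (fun _ h => lmapDomain_mem_supported h hs) p i hc

lemma coneSeq_mem_supported_length (p : ℕ) (T : α → α) (a : ℕ → α) (i : ℕ) :
    coneSeq R p T a i ∈ Finsupp.supported R R {l | l.length = i + 1} := by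
  induction i with
  | zero => exact Finsupp.single_mem_supported R 1 rfl
  | succ i ih =>
    refine lmapDomain_mem_supported (transfer_push_mem_supported (fun l hl => ?_) p i ih)
      fun l hl => ?_ <;> simpa using hl

lemma coneSeq_mem_supported (p : ℕ) (T : α → α) (a : ℕ → α) (i : ℕ) :
    coneSeq R p T a i ∈ Finsupp.supported R R
      {l | ∃ g : ℕ → ℕ, ∀ x ∈ l, ∃ j ≤ i, x = T^[g j] (a j)} := by
  induction i with
  | zero => exact Finsupp.single_mem_supported R 1 ⟨0, by simp⟩
  | succ i ih =>
    refine lmapDomain_mem_supported (transfer_push_mem_supported ?_ p i ih) ?_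
    · rintro l ⟨g, hg⟩
      refine ⟨fun j => g j + 1, ?_⟩
      simp only [List.mem_map, forall_exists_index, and_imp, forall_apply_eq_imp_iff₂]
      intro x hx
      obtain ⟨j, hj, rfl⟩ := hg x hx
      exact ⟨j, hj, (Function.iterate_succ_apply' T _ _).symm⟩
    · rintro l ⟨g, hg⟩
      refine ⟨Function.update g (i + 1) 0, List.forall_mem_cons.mpr ⟨⟨i + 1, le_rfl, by simp⟩, ?_⟩⟩
      intro x hx
      obtain ⟨j, hj, rfl⟩ := hg x hx
      exact ⟨j, hj.trans i.le_succ, by rw [Function.update_of_ne (by omega)]⟩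

lemma bd_transfer_push (p : ℕ) (T : α → α) (i : ℕ) (c : Chain R α) :
    bd (transfer p (push T) i c) = transfer p (push T) i (bd c) :=
  map_transfer (fun k => by rw [push_pow, bd_push]) p i

lemma bd_coneSeq_succ {p : ℕ} {T : α → α} (hT : T^[p] = id) (a : ℕ → α) (i : ℕ) :
    bd (coneSeq R p T a (i + 1)) = transfer p (push T) i (coneSeq R p T a i) := by
  suffices hcycle : transfer p (push T) i (bd (coneSeq R p T a i)) = 0 by
    rw [coneSeq, bd_cone, bd_transfer_push, hcycle, map_zero, sub_zero]
  cases i with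
  | zero => simp [coneSeq, simplexBd, transfer]
  | succ i =>
    have hpush : (push T : Module.End R (Chain R α)) ^ p = 1 := by
      rw [push_pow, hT]
      ext l : 2
      simp
    rw [bd_coneSeq_succ hT a i, ← Module.End.mul_apply, transfer_succ_mul_transfer hpush,
      LinearMap.zero_apply]

lemma isResolving_coneSeq {p : ℕ} {T : α → α} (hT : T^[p] = id) (a : ℕ → α) (N : ℕ) :
    IsResolving p T N (coneSeq R p T a) where
  homogeneous i _ := coneSeq_mem_supported_length p T a i
  bd_zero := by simp [coneSeq, simplexBd]
  bd_succ i _ := bd_coneSeq_succ hT a i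

end Resolving

section Cocycles

variable {n : ℕ}

/-- The indicator that the arc from `a` forward to `b` passes through the wrap-around of
`ZMod n`. -/
def wrap (a b : ZMod n) : ℤ :=
  if b.val < a.val then 1 else 0

/-- The carry cocycle of the extension `ℤ → ℤ → ZMod n`, as a homogeneous 2-cocycle. -/
def carry (a b c : ZMod n) : ℤ :=
  wrap a b + wrap b c - wrap a c

lemma mul_wrap [NeZero n] (a b : ZMod n) : n * wrap a b = a.val + (b - a).val - b.val := by
  unfold wrap
  split_ifs with h
  · have hab := ZMod.val_sub h.le
    have hneg : (b - a).val = n - (a - b).val := by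
      have hne : NeZero (a - b) := ⟨fun h0 => by rw [sub_eq_zero.mp h0] at h; exact h.ne rfl⟩
      rw [← neg_sub, ZMod.val_neg_of_ne_zero]
    have hlt := ZMod.val_lt (a - b)
    omega
  · have hab := ZMod.val_sub (not_lt.mp h)
    omega

lemma mul_carry [NeZero n] (a b c : ZMod n) :
    n * carry a b c = (b - a).val + (c - b).val - (c - a).val := by
  rw [carry, mul_sub, mul_add, mul_wrap, mul_wrap, mul_wrap]
  ring

lemma carry_add_right [NeZero n] (a b c k : ZMod n) :
    carry (a + k) (b + k) (c + k) = carry a b c :=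
  mul_left_cancel₀ (Nat.cast_ne_zero.mpr (NeZero.ne n))
    (by simp only [mul_carry, add_sub_add_right_eq_sub])

lemma carry_self_left (a c : ZMod n) : carry a a c = 0 := by
  simp [carry, wrap]

lemma carry_self_right (a b : ZMod n) : carry a b b = 0 := by
  simp [carry, wrap]

lemma sum_range_natCast [NeZero n] {A : Type*} [AddCommMonoid A] (F : ZMod n → A) :
    ∑ k ∈ Finset.range n, F k = ∑ c, F c := by
  refine Finset.sum_nbij (fun k => (k : ZMod n)) (by simp) (fun k hk l hl h => ?_)
    (fun c _ => ?_) (by simp)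
  · simp only [Finset.coe_range, Set.mem_Iio] at hk hl
    simpa [ZMod.val_natCast, Nat.mod_eq_of_lt, hk, hl] using congrArg ZMod.val h
  · exact ⟨c.val, by simpa using ZMod.val_lt c, ZMod.natCast_zmod_val c⟩

lemma sum_wrap_add [NeZero n] (a b : ZMod n) :
    ∑ k ∈ Finset.range n, wrap (a + (k : ZMod n)) (b + k) = (b - a).val := by
  have hval (a : ZMod n) : ∑ k ∈ Finset.range n, ((a + (k : ZMod n)).val : ℤ) =
      ∑ c : ZMod n, (c.val : ℤ) :=
    (sum_range_natCast fun k : ZMod n => ((a + k).val : ℤ)).trans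
      (Equiv.sum_comp (Equiv.addLeft a) fun c : ZMod n => (c.val : ℤ))
  refine mul_left_cancel₀ (Nat.cast_ne_zero.mpr (NeZero.ne n) : (n : ℤ) ≠ 0) ?_
  simp only [Finset.mul_sum, mul_wrap, Finset.sum_sub_distrib, Finset.sum_add_distrib, hval,
    add_sub_add_right_eq_sub]
  simp

/-- The cochain that is the `j`-th cup power of the carry cocycle on simplices of dimension `2 * j`,
and zero on simplices of odd dimension. -/
def evenCocycle : List (ZMod n) → ZMod n
  | [] => 0
  | [_] => 1
  | [_, _] => 0
  | a :: b :: c :: l => carry a b c * evenCocycle (c :: l)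

/-- The cup product of the vertex cochain `z` with `evenCocycle`. -/
def cupEven (z : ZMod n → ZMod n) : List (ZMod n) → ZMod n
  | [] => 0
  | a :: l => z a * evenCocycle (a :: l)

/-- A primitive of `evenCocycle` on the augmented complex, whose translates sum to
`oddCocycle`. -/
def evenPrimitive : List (ZMod n) → ZMod n
  | [] => 1
  | a :: l => cupEven (fun b => wrap a b) l

/-- The cup product of the cocycle `(a, b) ↦ b - a` with `evenCocycle`. -/
def oddCocycle : List (ZMod n) → ZMod n
  | [] => 0
  | a :: l => cupEven (fun b => b - a) l

lemma cobd_evenCocycle : ∀ l : List (ZMod n), cobd evenCocycle l = 0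
  | [] => rfl
  | [_] => by simp [cobd, evenCocycle]
  | [_, _] => by simp [cobd, evenCocycle]
  | [_, _, _] => by simp [cobd, evenCocycle]
  | a :: b :: c :: d :: l => by
    have ih : cobd (fun l' => evenCocycle (c :: l')) (d :: l) = evenCocycle (d :: l) :=
      (sub_eq_zero.mp (cobd_evenCocycle (c :: d :: l))).symm
    have hcons : (fun l' => evenCocycle (a :: b :: c :: l')) =
        fun l' => carry a b c * evenCocycle (c :: l') := rfl
    rw [cobd, cobd, cobd, hcons, cobd_mul_left, ih]
    simp only [evenCocycle, carry]
    push_cast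
    ring

lemma cobd_evenCocycle_cons (a : ZMod n) (l : List (ZMod n)) :
    cobd (fun l' => evenCocycle (a :: l')) l = evenCocycle l :=
  (sub_eq_zero.mp (cobd_evenCocycle (a :: l))).symm

lemma cobd_cupEven_cons (z : ZMod n → ZMod n) (a : ZMod n) (l : List (ZMod n)) :
    cobd (cupEven z) (a :: l) = cupEven (fun b => z b - z a) l := by
  have hcons : (fun l' => cupEven z (a :: l')) = fun l' => z a * evenCocycle (a :: l') := rfl
  rw [cobd, hcons, cobd_mul_left, cobd_evenCocycle_cons]
  cases l with
  | nil => simp [cupEven, evenCocycle]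
  | cons b l => simp only [cupEven, sub_mul]

lemma cobd_cupEven_id : cobd (cupEven id) = (oddCocycle : List (ZMod n) → ZMod n) := by
  funext l
  cases l with
  | nil => rfl
  | cons a l => exact cobd_cupEven_cons id a l

lemma cobd_evenPrimitive : cobd evenPrimitive = (evenCocycle : List (ZMod n) → ZMod n) := by
  funext l
  match l with
  | [] => rfl
  | [a] => simp [cobd, evenPrimitive, evenCocycle]
  | a :: b :: l =>
    have hcons : (fun l' => evenPrimitive (a :: l')) = cupEven fun b => (wrap a b : ZMod n) := rfl
    rw [cobd, hcons, cobd_cupEven_cons]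
    cases l with
    | nil => simp [evenPrimitive, cupEven, evenCocycle]
    | cons c l =>
      simp only [evenPrimitive, cupEven, evenCocycle, carry]
      push_cast
      ring

lemma evenCocycle_map_add [NeZero n] (k : ZMod n) :
    ∀ l : List (ZMod n), evenCocycle (l.map (· + k)) = evenCocycle l
  | [] | [_] | [_, _] => rfl
  | a :: b :: c :: l => by
    have ih := evenCocycle_map_add k (c :: l)
    simp only [List.map_cons] at ih
    simp only [List.map_cons, evenCocycle, carry_add_right, ih]

lemma cupEven_map_add_one_sub [NeZero n] (l : List (ZMod n)) :
    cupEven id (l.map (· + 1)) - cupEven id l = evenCocycle l := by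
  cases l with
  | nil => simp [cupEven, evenCocycle]
  | cons a l =>
    have hinv := evenCocycle_map_add 1 (a :: l)
    simp only [List.map_cons] at hinv
    simp only [List.map_cons, cupEven, hinv, id_eq]
    ring

lemma sum_evenPrimitive_map_add [NeZero n] :
    ∀ l : List (ZMod n),
      ∑ k ∈ Finset.range n, evenPrimitive (l.map (· + (k : ZMod n))) = oddCocycle l
  | [] => by simp [evenPrimitive, oddCocycle]
  | [a] => by simp [evenPrimitive, oddCocycle, cupEven]
  | a :: b :: l => by
    have hinv (k : ZMod n) := evenCocycle_map_add k (b :: l)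
    simp only [List.map_cons] at hinv
    simp only [List.map_cons, evenPrimitive, oddCocycle, cupEven, hinv, ← Finset.sum_mul,
      ← Int.cast_sum, sum_wrap_add, Int.cast_natCast, ZMod.natCast_zmod_val]

lemma isChain_ne_of_evenCocycle_ne_zero :
    ∀ l : List (ZMod n), evenCocycle l ≠ 0 → l.IsChain (· ≠ ·)
  | [], _ => .nil
  | [_], _ => .singleton _
  | [_, _], h => absurd rfl h
  | a :: b :: c :: l, h => by
    have hcarry : carry a b c ≠ 0 := fun h0 => h (by simp [evenCocycle, h0])
    have hchain := isChain_ne_of_evenCocycle_ne_zero (c :: l) (right_ne_zero_of_mul h)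
    refine .cons_cons ?_ (.cons_cons ?_ hchain)
    · rintro rfl
      exact hcarry (carry_self_left a c)
    · rintro rfl
      exact hcarry (carry_self_right a b)

lemma isChain_ne_of_oddCocycle_ne_zero (l : List (ZMod n)) (h : oddCocycle l ≠ 0) :
    l.IsChain (· ≠ ·) := by
  match l, h with
  | [], _ => exact .nil
  | [_], _ => exact .singleton _
  | a :: b :: l, h =>
    exact .cons_cons (sub_ne_zero.mp (left_ne_zero_of_mul h)).symm
      (isChain_ne_of_evenCocycle_ne_zero _ (right_ne_zero_of_mul h))

/-- The invariant cocycle in degree `i` generating the cohomology of the cyclic group `ZMod n`. -/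
def periodCocycle (i : ℕ) : List (ZMod n) → ZMod n :=
  if Even i then evenCocycle else oddCocycle

lemma isChain_ne_of_periodCocycle_ne_zero {i : ℕ} {l : List (ZMod n)} (h : periodCocycle i l ≠ 0) :
    l.IsChain (· ≠ ·) := by
  unfold periodCocycle at h
  split_ifs at h
  · exact isChain_ne_of_evenCocycle_ne_zero l h
  · exact isChain_ne_of_oddCocycle_ne_zero l h

lemma linearCombination_periodCocycle_succ [NeZero n] {i : ℕ} {c c' : Chain (ZMod n) (ZMod n)}
    (hbd : bd c' = transfer n (push (· + 1)) i c) :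
    Finsupp.linearCombination (ZMod n) (periodCocycle (i + 1)) c' =
      Finsupp.linearCombination (ZMod n) (periodCocycle i) c := by
  by_cases hi : Even i
  · simp only [periodCocycle, Nat.even_add_one, hi, not_true, if_false, if_true]
    rw [← cobd_cupEven_id, ← linearCombination_bd, hbd]
    simp only [transfer, hi, if_true, LinearMap.sub_apply, Module.End.one_apply, map_sub,
      linearCombination_push]
    simp only [Finsupp.linearCombination_apply, ← Finsupp.sum_sub, ← smul_sub,
      cupEven_map_add_one_sub]
  · simp only [periodCocycle, Nat.even_add_one, hi, not_false_eq_true, if_false, if_true]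
    rw [← cobd_evenPrimitive, ← linearCombination_bd, hbd]
    simp only [transfer, hi, if_false, LinearMap.sum_apply, map_sum, push_pow,
      linearCombination_push, add_right_iterate, nsmul_one]
    simp only [Finsupp.linearCombination_apply, Finsupp.sum]
    rw [Finset.sum_comm]
    simp only [← Finset.smul_sum, sum_evenPrimitive_map_add]

lemma IsResolving.linearCombination_periodCocycle [NeZero n] {N : ℕ}
    {h : ℕ → Chain (ZMod n) (ZMod n)} (hh : IsResolving n (· + 1) N h) {i : ℕ} (hi : i ≤ N) :
    Finsupp.linearCombination (ZMod n) (periodCocycle i) (h i) = 1 := by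
  induction i with
  | zero =>
    simp only [periodCocycle, Even.zero, if_true]
    rw [← cobd_evenPrimitive, ← linearCombination_bd, hh.bd_zero]
    simp [evenPrimitive]
  | succ i ih => rw [linearCombination_periodCocycle_succ (hh.bd_succ i hi), ih (by omega)]

theorem IsResolving.exists_isChain_ne [Fact (1 < n)] {N : ℕ}
    {h : ℕ → Chain (ZMod n) (ZMod n)} (hh : IsResolving n (· + 1) N h) {i : ℕ} (hi : i ≤ N) :
    ∃ l ∈ (h i).support, l.IsChain (· ≠ ·) := by
  have : NeZero n := ⟨by have := Fact.out (p := 1 < n); omega⟩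
  have hne : Finsupp.linearCombination (ZMod n) (periodCocycle i) (h i) ≠ 0 := by
    rw [hh.linearCombination_periodCocycle hi]
    exact one_ne_zero
  obtain ⟨l, hl, hne⟩ := Finset.exists_ne_zero_of_sum_ne_zero hne
  exact ⟨l, hl, isChain_ne_of_periodCocycle_ne_zero (right_ne_zero_of_mul hne)⟩

end Cocycles

variable {R α β : Type*} [CommRing R]

section Flags

/-- `L` is a complete flag of nonempty faces of the simplex `l`, listed from the largest face down;
it may have repetitions. -/
structure IsFlag (l : List α) (L : List (List α)) : Prop where
  length_eq : L.length = l.length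
  pairwise : L.Pairwise fun l₁ l₂ => l₂.Sublist l₁
  sublist : ∀ l' ∈ L, l'.Sublist l
  ne_nil : ∀ l' ∈ L, l' ≠ []

/-- The signed sum of the complete flags of faces of an `(n - 1)`-simplex. -/
noncomputable def flagSum : ℕ → List α → Chain R (List α)
  | 0, _ => Finsupp.single [] 1
  | n + 1, l => cone l (Finsupp.linearCombination R (flagSum n) (simplexBd l))

/-- Barycentric subdivision on chains of dimension `n - 1`, with a face `l` standing for its
barycenter. -/
noncomputable def subdivision (n : ℕ) : Chain R α →ₗ[R] Chain R (List α) :=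
  Finsupp.linearCombination R (flagSum n)

lemma flagSum_succ (n : ℕ) (l : List α) :
    (flagSum (n + 1) l : Chain R (List α)) = cone l (subdivision n (simplexBd l)) :=
  rfl

@[simp]
lemma subdivision_single (n : ℕ) (l : List α) (r : R) :
    subdivision n (Finsupp.single l r) = r • flagSum n l :=
  Finsupp.linearCombination_single R r l

lemma bd_subdivision_zero (c : Chain R α) : bd (subdivision 0 c) = 0 := by
  suffices bd ∘ₗ subdivision 0 = (0 : Chain R α →ₗ[R] _) from LinearMap.congr_fun this c
  ext l : 2
  simp [flagSum, simplexBd]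

lemma bd_subdivision_succ (n : ℕ) (c : Chain R α) :
    bd (subdivision (n + 1) c) = subdivision n (bd c) := by
  suffices bd ∘ₗ subdivision (n + 1) = subdivision n ∘ₗ (bd : Chain R α →ₗ[R] _) from
    LinearMap.congr_fun this c
  ext l : 2
  suffices hcycle : bd (subdivision n (simplexBd l : Chain R α)) = 0 by
    simp [flagSum_succ, bd_cone, hcycle]
  cases n with
  | zero => exact bd_subdivision_zero _
  | succ n => rw [bd_subdivision_succ, bd_simplexBd, map_zero]

lemma push_subdivision (f : α → β) (n : ℕ) (c : Chain R α) :
    push (List.map f) (subdivision n c) = subdivision n (push f c) := by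
  suffices push (List.map f) ∘ₗ subdivision n = subdivision n ∘ₗ (push f : Chain R α →ₗ[R] _) from
    LinearMap.congr_fun this c
  ext l : 2
  cases n with
  | zero => simp [flagSum]
  | succ n => simp [flagSum_succ, push_cone, push_subdivision f n, push_simplexBd]

lemma flagSum_mem_supported {n : ℕ} {l : List α} (hl : l.length = n) :
    (flagSum n l : Chain R (List α)) ∈ Finsupp.supported R R {L | IsFlag l L} := by
  induction n generalizing l with
  | zero =>
    exact Finsupp.single_mem_supported R 1 ⟨hl.symm, .nil, by simp, by simp⟩
  | succ n ih =>
    have hfaces : Finsupp.linearCombination R (flagSum n) (simplexBd l : Chain R α) ∈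
        Finsupp.supported R R
          {L | ∃ l', (l'.length + 1 = l.length ∧ l'.Sublist l) ∧ IsFlag l' L} := by
      refine linearCombination_mem fun l' hl' => ?_
      have hface := simplexBd_mem_supported l hl'
      refine Finsupp.supported_mono ?_ (ih (Nat.add_right_cancel (hface.1.trans hl)))
      exact fun L hL => ⟨l', hface, hL⟩
    refine lmapDomain_mem_supported hfaces ?_
    rintro L ⟨l', ⟨hlen, hsub⟩, hL⟩
    have hL_sub : ∀ l'' ∈ L, l''.Sublist l := fun l'' h => (hL.sublist l'' h).trans hsub
    refine ⟨by simp [hL.length_eq, hlen], List.pairwise_cons.mpr ⟨hL_sub, hL.pairwise⟩, ?_, ?_⟩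
    · simpa using hL_sub
    · simpa [← List.length_eq_zero_iff, hl] using hL.ne_nil

lemma subdivision_mem_supported {n : ℕ} {c : Chain R α}
    (hc : c ∈ Finsupp.supported R R {l | l.length = n}) :
    subdivision n c ∈ Finsupp.supported R R {L | ∃ l ∈ c.support, IsFlag l L} := by
  refine linearCombination_mem fun l hl => ?_
  refine Finsupp.supported_mono ?_ (flagSum_mem_supported (hc hl))
  exact fun L hL => ⟨l, hl, hL⟩

variable {p N : ℕ} {T : α → α} {T' : β → β} {h : ℕ → Chain R α}

lemma IsResolving.exists_isFlag_of_mem_support (hh : IsResolving p T N h) (b : List α → β) {i : ℕ}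
    (hi : i ≤ N) {l : List β} (hl : l ∈ (push b (subdivision (i + 1) (h i))).support) :
    ∃ l₀ ∈ (h i).support, ∃ L, IsFlag l₀ L ∧ L.map b = l := by
  have hmem : push b (subdivision (i + 1) (h i)) ∈
      Finsupp.supported R R {l | ∃ l₀ ∈ (h i).support, ∃ L, IsFlag l₀ L ∧ L.map b = l} := by
    refine lmapDomain_mem_supported (subdivision_mem_supported (hh.homogeneous i hi)) ?_
    rintro L ⟨l₀, hl₀, hL⟩
    exact ⟨l₀, hl₀, L, hL, rfl⟩
  exact hmem hl

theorem IsResolving.subdivide (hh : IsResolving p T N h) {b : List α → β}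
    (hb : ∀ i ≤ N, ∀ l ∈ (h i).support, ∀ l', l'.Sublist l → l' ≠ [] →
      ∀ k, b (l'.map T^[k]) = T'^[k] (b l')) :
    IsResolving p T' N fun i => push b (subdivision (i + 1) (h i)) where
  homogeneous i hi l hl := by
    obtain ⟨l₀, hl₀, L, hL, rfl⟩ := hh.exists_isFlag_of_mem_support b hi hl
    simpa [hL.length_eq] using hh.homogeneous i hi hl₀
  bd_zero := by
    rw [bd_push, bd_subdivision_succ, hh.bd_zero]
    simp [flagSum]
  bd_succ i hi := by
    rw [bd_push, bd_subdivision_succ, hh.bd_succ i hi]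
    refine map_transfer (F := push b ∘ₗ (subdivision (i + 1) : Chain R α →ₗ[R] _)) (fun k => ?_) p i
    simp only [push_pow, LinearMap.comp_apply, ← push_subdivision, push_push]
    refine push_congr fun L hL l' hl' => ?_
    obtain ⟨l, hl, hflag⟩ := subdivision_mem_supported (hh.homogeneous i hi.le) hL
    exact hb i hi.le l hl l' (hflag.sublist l' hl') (hflag.ne_nil l' hl') k

end Flags

section Barycenters

variable {V W : Type*} [AddCommGroup V] [Module ℝ V] [AddCommGroup W] [Module ℝ W]

/-- The barycenter of a nonempty list of points; it is `0` for the empty list. -/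
noncomputable def bary (l : List V) : V :=
  (l.length : ℝ)⁻¹ • l.sum

lemma bary_map (f : V →ₗ[ℝ] W) (l : List V) : bary (l.map f) = f (bary l) := by
  simp [bary, map_list_sum]

lemma bary_perm {l₁ l₂ : List V} (h : l₁.Perm l₂) : bary l₁ = bary l₂ := by
  rw [bary, bary, h.length_eq, h.sum_eq]

lemma bary_cons (x : V) (l : List V) :
    bary (x :: l) = AffineMap.lineMap x (bary l) (l.length / (l.length + 1) : ℝ) := by
  rcases eq_or_ne l [] with rfl | hl
  · simp [bary]
  · have hlen : (l.length : ℝ) ≠ 0 := by simpa using hl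
    rw [AffineMap.lineMap_apply_module]
    simp only [bary, List.length_cons, List.sum_cons, smul_add, smul_smul, Nat.cast_succ]
    congr 2 <;> field_simp
    ring

lemma bary_mem {K : Set V} (hK : Convex ℝ K) {l : List V} (hl : l ≠ [])
    (h : ∀ x ∈ l, x ∈ K) : bary l ∈ K := by
  induction l with
  | nil => exact absurd rfl hl
  | cons x l ih =>
    rcases eq_or_ne l [] with rfl | hne
    · simpa [bary] using h
    · rw [bary_cons]
      have hl_mem := ih hne fun y hy => h y (by simp [hy])
      refine hK.lineMap_mem (h x (by simp)) hl_mem ⟨by positivity, ?_⟩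
      exact div_le_one_of_le₀ (by linarith) (by positivity)

end Barycenters

section Mesh

variable {R V : Type*} [CommRing R] [NormedAddCommGroup V] [NormedSpace ℝ V]

lemma dist_bary_le {l : List V} {r : ℝ} {M : ℕ} (hM : l.length ≤ M + 1)
    (hr : ∀ x ∈ l, ∀ y ∈ l, dist x y ≤ r) {x : V} (hx : x ∈ l) :
    dist x (bary l) ≤ M / (M + 1) * r := by
  classical
  have hr0 : 0 ≤ r := dist_self x ▸ hr x hx x hx
  have hperm := List.perm_cons_erase hx
  set t := l.erase x
  have htM : (t.length : ℝ) ≤ M := by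
    have := hperm.length_eq
    simp only [List.length_cons] at this
    exact_mod_cast (by omega : t.length ≤ M)
  have hcoef : (t.length / (t.length + 1) : ℝ) ≤ M / (M + 1) := by
    rw [div_le_div_iff₀ (by positivity) (by positivity)]
    linarith
  rw [bary_perm hperm, bary_cons, dist_left_lineMap, Real.norm_of_nonneg (by positivity)]
  rcases eq_or_ne t [] with ht | ht
  · simp only [ht, List.length_nil, Nat.cast_zero, zero_div, zero_mul]
    positivity
  · have hmem : bary t ∈ Metric.closedBall x r :=
      bary_mem (convex_closedBall x r) ht fun y hy =>
        Metric.mem_closedBall.mpr (hr y (List.mem_of_mem_erase hy) x hx)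
    gcongr
    exact Metric.mem_closedBall'.mp hmem

lemma dist_bary_bary_le {l l' : List V} {r : ℝ} {M : ℕ} (hM : l.length ≤ M + 1)
    (hr : ∀ x ∈ l, ∀ y ∈ l, dist x y ≤ r) (hl' : l' ≠ []) (hsub : l'.Sublist l) :
    dist (bary l) (bary l') ≤ M / (M + 1) * r :=
  Metric.mem_closedBall'.mp <| bary_mem (convex_closedBall _ _) hl' fun _ hx =>
    Metric.mem_closedBall.mpr (dist_bary_le hM hr (hsub.subset hx))

/-- All the points of `l` lie in a common member of `𝒦`, at mutual distance at most `r`. -/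
def IsSmall (𝒦 : Set (Set V)) (r : ℝ) (l : List V) : Prop :=
  (∃ K ∈ 𝒦, ∀ x ∈ l, x ∈ K) ∧ ∀ x ∈ l, ∀ y ∈ l, dist x y ≤ r

lemma IsSmall.map_bary {𝒦 : Set (Set V)} (h𝒦 : ∀ K ∈ 𝒦, Convex ℝ K) {r : ℝ} {l : List V}
    (hl : IsSmall 𝒦 r l) {M : ℕ} (hM : l.length ≤ M + 1) {L : List (List V)} (hL : IsFlag l L) :
    IsSmall 𝒦 (M / (M + 1) * r) (L.map bary) := by
  obtain ⟨⟨K, hK𝒦, hK⟩, hr⟩ := hl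
  refine ⟨⟨K, hK𝒦, ?_⟩, ?_⟩
  · simp only [List.mem_map, forall_exists_index, and_imp, forall_apply_eq_imp_iff₂]
    exact fun l' hl' => bary_mem (h𝒦 K hK𝒦) (hL.ne_nil l' hl') fun x hx =>
      hK x ((hL.sublist l' hl').subset hx)
  · have hpair : (L.map bary).Pairwise fun x y => dist x y ≤ M / (M + 1) * r := by
      refine List.pairwise_map.mpr (hL.pairwise.imp_of_mem fun {l₁ l₂} h₁ h₂ hsub => ?_)
      have hsub₁ := hL.sublist l₁ h₁
      exact dist_bary_bary_le (hsub₁.length_le.trans hM)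
        (fun x hx y hy => hr x (hsub₁.subset hx) y (hsub₁.subset hy)) (hL.ne_nil l₂ h₂) hsub
    have : Std.Symm fun x y : V => dist x y ≤ M / (M + 1) * r := ⟨fun x y h => dist_comm x y ▸ h⟩
    refine hpair.forall_of_forall ?_
    simp only [List.mem_map, forall_exists_index, and_imp, forall_apply_eq_imp_iff₂, dist_self]
    intro l' hl'
    obtain ⟨x, hx⟩ := List.exists_mem_of_ne_nil l' (hL.ne_nil l' hl')
    have hxl := (hL.sublist l' hl').subset hx
    have hr0 : 0 ≤ r := dist_self x ▸ hr x hxl x hxl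
    positivity

variable {p N : ℕ} {T : V →ₗ[ℝ] V} {h : ℕ → Chain R V} {𝒦 : Set (Set V)} {r : ℝ}

lemma IsResolving.subdivide_bary (hh : IsResolving p T N h) :
    IsResolving p T N fun i => push bary (subdivision (i + 1) (h i)) :=
  hh.subdivide fun _ _ _ _ l' _ _ k => by
    simp only [← Module.End.pow_apply, ← bary_map, Module.End.coe_pow]

theorem IsResolving.exists_isSmall (hh : IsResolving p T N h) (h𝒦 : ∀ K ∈ 𝒦, Convex ℝ K)
    (hsmall : ∀ i ≤ N, ∀ l ∈ (h i).support, IsSmall 𝒦 r l) {δ : ℝ} (hδ : 0 < δ) :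
    ∃ h' : ℕ → Chain R V, IsResolving p T N h' ∧
      ∀ i ≤ N, ∀ l ∈ (h' i).support, IsSmall 𝒦 δ l := by
  have hiter (n : ℕ) : ∃ h' : ℕ → Chain R V, IsResolving p T N h' ∧
      ∀ i ≤ N, ∀ l ∈ (h' i).support, IsSmall 𝒦 ((N / (N + 1)) ^ n * r) l := by
    induction n with
    | zero => exact ⟨h, hh, by simpa using hsmall⟩
    | succ n ih =>
      obtain ⟨h', hh', hsmall'⟩ := ih
      refine ⟨_, hh'.subdivide_bary, fun i hi l hl => ?_⟩
      obtain ⟨l₀, hl₀, L, hL, rfl⟩ := hh'.exists_isFlag_of_mem_support bary hi hl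
      have hlen : l₀.length = i + 1 := hh'.homogeneous i hi hl₀
      rw [pow_succ', mul_assoc]
      exact (hsmall' i hi l₀ hl₀).map_bary h𝒦 (by omega) hL
  have hlim : Filter.Tendsto (fun n : ℕ => (N / (N + 1) : ℝ) ^ n * r) Filter.atTop (nhds 0) := by
    simpa using (tendsto_pow_atTop_nhds_zero_of_lt_one (by positivity)
      ((div_lt_one (by positivity)).mpr (lt_add_one (N : ℝ)))).mul_const r
  obtain ⟨n, hn⟩ := (hlim.eventually_le_const hδ).exists
  obtain ⟨h', hh', hsmall'⟩ := hiter n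
  exact ⟨h', hh', fun i hi l hl =>
    ⟨(hsmall' i hi l hl).1, fun x hx y hy => ((hsmall' i hi l hl).2 x hx y hy).trans hn⟩⟩

end Mesh

section Faces

variable {n : ℕ} {κ : Type*}

variable (n κ) in
/-- The cyclic shift of tuples indexed by `ZMod n`. -/
def shift : (ZMod n → κ → ℝ) →ₗ[ℝ] (ZMod n → κ → ℝ) :=
  LinearMap.funLeft ℝ (κ → ℝ) (· - 1)

lemma shift_apply (x : ZMod n → κ → ℝ) (k : ZMod n) : shift n κ x k = x (k - 1) :=
  rfl

lemma shift_iterate_apply (j : ℕ) (x : ZMod n → κ → ℝ) (k : ZMod n) :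
    (shift n κ)^[j] x k = x (k - j) := by
  induction j generalizing k with
  | zero => simp
  | succ j ih =>
    rw [Function.iterate_succ_apply', shift_apply, ih, Nat.cast_succ, sub_sub, add_comm]

lemma shift_iterate_self : (shift n κ)^[n] = id := by
  funext x k
  simp [shift_iterate_apply]

variable [Fintype κ]

/-- The face of the standard simplex on `ZMod n × κ` that omits the vertices `(c t, t)`. -/
def face [NeZero n] (c : κ → ZMod n) : Set (ZMod n → κ → ℝ) :=
  {x | (∀ k t, 0 ≤ x k t) ∧ ∑ k, ∑ t, x k t = 1 ∧ ∀ t, x (c t) t = 0}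

lemma convex_face [NeZero n] (c : κ → ZMod n) : Convex ℝ (face c) := by
  rintro x ⟨hx₀, hx₁, hxc⟩ y ⟨hy₀, hy₁, hyc⟩ a b ha hb hab
  refine ⟨fun k t => ?_, ?_, fun t => by simp [hxc, hyc]⟩
  · exact add_nonneg (mul_nonneg ha (hx₀ k t)) (mul_nonneg hb (hy₀ k t))
  · simp [Finset.sum_add_distrib, ← Finset.mul_sum, hx₁, hy₁, hab]

lemma isCompact_face [NeZero n] (c : κ → ZMod n) : IsCompact (face c) := by
  refine isCompact_Icc.of_isClosed_subset (s := Set.Icc 0 1) ?_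
    fun x ⟨hx₀, hx₁, _⟩ => ⟨hx₀, fun k t => ?_⟩
  · simp only [face, Set.ofPred_and, Set.ofPred_forall]
    refine .inter ?_ (.inter ?_ ?_)
    · exact isClosed_iInter fun k => isClosed_iInter fun t =>
        isClosed_le (by fun_prop) (by fun_prop)
    · exact isClosed_eq (by fun_prop) (by fun_prop)
    · exact isClosed_iInter fun t => isClosed_eq (by fun_prop) (by fun_prop)
  · calc x k t ≤ ∑ t, x k t := Finset.single_le_sum (fun t _ => hx₀ k t) (Finset.mem_univ t)
      _ ≤ ∑ k, ∑ t, x k t :=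
        Finset.single_le_sum (fun k _ => Finset.sum_nonneg fun t _ => hx₀ k t) (Finset.mem_univ k)
      _ = 1 := hx₁

variable (n κ) in
lemma isCompact_iUnion_face [NeZero n] : IsCompact (⋃ c : κ → ZMod n, face c) :=
  isCompact_iUnion isCompact_face

lemma exists_ne_of_mem_face [NeZero n] {c : κ → ZMod n} {x : ZMod n → κ → ℝ} (hx : x ∈ face c) :
    ∃ k k', x k ≠ x k' := by
  obtain ⟨-, hx₁, hxc⟩ := hx
  by_contra! hconst
  have hzero (k : ZMod n) (t : κ) : x k t = 0 := by rw [hconst k (c t), hxc]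
  simp [hzero] at hx₁

lemma exists_card_fiber_lt [DecidableEq κ] {N : ℕ} (hN : N < Fintype.card κ * (n - 1)) :
    ∃ τ : ℕ → κ, ∀ t, ({j ∈ Finset.range (N + 1) | τ j = t}).card < n := by
  have hn : 0 < n - 1 := pos_of_mul_pos_right (Nat.zero_lt_of_lt hN) (Nat.zero_le _)
  have hblock (j : ℕ) (hj : j ≤ N) : ∃ t, (Fintype.equivFin κ t : ℕ) = j / (n - 1) :=
    ⟨(Fintype.equivFin κ).symm ⟨_, (Nat.div_lt_iff_lt_mul hn).mpr (hj.trans_lt hN)⟩, by simp⟩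
  have : Nonempty κ := (hblock 0 N.zero_le).nonempty
  choose! τ hτ using hblock
  refine ⟨τ, fun t => ?_⟩
  let s := (Fintype.equivFin κ t : ℕ)
  have hsub : {j ∈ Finset.range (N + 1) | τ j = t} ⊆
      Finset.Icc (s * (n - 1)) (s * (n - 1) + (n - 1) - 1) := by
    intro j hj
    obtain ⟨hjN, rfl⟩ := Finset.mem_filter.mp hj
    rw [Finset.mem_Icc, ← Nat.div_eq_iff hn]
    exact (hτ j (by simpa [Nat.lt_succ_iff] using hjN)).symm
  have := Finset.card_le_card hsub
  rw [Nat.card_Icc] at this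
  omega

lemma exists_mem_face [NeZero n] [DecidableEq κ] {N : ℕ} {τ : ℕ → κ}
    (hτ : ∀ t, ({j ∈ Finset.range (N + 1) | τ j = t}).card < n) (g : ℕ → ℕ) :
    ∃ c, ∀ j ≤ N, (shift n κ)^[g j] (Pi.single 0 (Pi.single (τ j) 1)) ∈ face c := by
  have havoid (t : κ) : ∃ k : ZMod n, ∀ j ≤ N, τ j = t → (g j : ZMod n) ≠ k := by
    have hcard : (({j ∈ Finset.range (N + 1) | τ j = t}).image fun j => (g j : ZMod n)).card <
        (Finset.univ : Finset (ZMod n)).card := by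
      rw [Finset.card_univ, ZMod.card]
      exact Finset.card_image_le.trans_lt (hτ t)
    obtain ⟨k, -, hk⟩ := Finset.exists_mem_notMem_of_card_lt_card hcard
    refine ⟨k, fun j hj hjt hjk => hk (Finset.mem_image.mpr ⟨j, ?_, hjk⟩)⟩
    simp [hjt, Nat.lt_succ_iff.mpr hj]
  choose c hc using havoid
  refine ⟨c, fun j hj => ?_⟩
  have hval (k : ZMod n) (t : κ) : (shift n κ)^[g j] (Pi.single 0 (Pi.single (τ j) 1)) k t =
      if k = g j then if t = τ j then 1 else 0 else 0 := by
    rw [shift_iterate_apply]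
    by_cases hk : k = g j <;> simp [Pi.single_apply, sub_eq_zero, hk]
  refine ⟨fun k t => ?_, by simp [hval], fun t => ?_⟩
  · rw [hval]
    split_ifs <;> norm_num
  · rw [hval]
    split_ifs with hk ht
    · exact absurd hk.symm (hc t j hj ht.symm)
    · rfl
    · rfl

theorem exists_isResolving_isSmall [NeZero n] (R : Type*) [CommRing R] {N : ℕ}
    (hN : N < Fintype.card κ * (n - 1)) {δ : ℝ} (hδ : 0 < δ) :
    ∃ h : ℕ → Chain R (ZMod n → κ → ℝ), IsResolving n (shift n κ) N h ∧
      ∀ i ≤ N, ∀ l ∈ (h i).support, IsSmall (Set.range face) δ l := by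
  classical
  obtain ⟨τ, hτ⟩ := exists_card_fiber_lt hN
  obtain ⟨r, hr⟩ := Metric.isBounded_iff.mp (isCompact_iUnion_face n κ).isBounded
  have hcone := isResolving_coneSeq (R := R) (shift_iterate_self (n := n) (κ := κ))
    (fun j => Pi.single 0 (Pi.single (τ j) 1)) N
  refine hcone.exists_isSmall (r := r) ?_ (fun i hi l hl => ?_) hδ
  · rintro _ ⟨c, rfl⟩
    exact convex_face c
  · obtain ⟨g, hg⟩ := coneSeq_mem_supported n _ _ i hl
    obtain ⟨c, hc⟩ := exists_mem_face hτ g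
    have hl_face : ∀ x ∈ l, x ∈ face c := fun x hx => by
      obtain ⟨j, hj, rfl⟩ := hg x hx
      exact hc j (hj.trans hi)
    exact ⟨⟨face c, ⟨c, rfl⟩, hl_face⟩, fun x hx y hy =>
      hr (Set.mem_iUnion_of_mem c (hl_face x hx)) (Set.mem_iUnion_of_mem c (hl_face y hy))⟩

end Faces

section Patterns

variable {α ι γ : Type*} [Fintype γ] [DecidableEq γ] {P : α → ι → Finset γ}

/-- The union of the families `P x` over the points `x` of `l`. -/
def pattern (P : α → ι → Finset γ) (l : List α) (t : ι) : Finset γ :=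
  {k | ∃ x ∈ l, k ∈ P x t}

lemma mem_pattern {l : List α} {t : ι} {k : γ} : k ∈ pattern P l t ↔ ∃ x ∈ l, k ∈ P x t := by
  simp [pattern]

lemma pattern_mono {l l' : List α} (h : l' ⊆ l) (t : ι) : pattern P l' t ⊆ pattern P l t :=
  fun _ hk =>
    let ⟨x, hx, hkx⟩ := mem_pattern.mp hk
    mem_pattern.mpr ⟨x, h hx, hkx⟩

lemma sum_card_pattern_lt [Fintype ι] {l l' : List α} (hsub : l' ⊆ l)
    (hne : pattern P l ≠ pattern P l') :
    ∑ t, (pattern P l' t).card < ∑ t, (pattern P l t).card := by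
  obtain ⟨t, ht⟩ := Function.ne_iff.mp hne
  refine Finset.sum_lt_sum (fun t _ => Finset.card_le_card (pattern_mono hsub t))
    ⟨t, Finset.mem_univ t, Finset.card_lt_card ?_⟩
  exact (pattern_mono hsub t).ssubset_of_ne ht.symm

lemma card_lt_of_ne_univ {p : ℕ} [NeZero p] {A : Finset (ZMod p)} (hA : A ≠ Finset.univ) :
    A.card < p := by
  simpa only [ZMod.card] using (Finset.card_lt_iff_ne_univ A).mpr hA

lemma pattern_map_iterate {p : ℕ} [NeZero p] {P : α → ι → Finset (ZMod p)} {T : α → α}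
    (hP : ∀ x t, P (T x) t = (P x t).map (addRightEmbedding 1)) (j : ℕ) (l : List α) (t : ι) :
    pattern P (l.map T^[j]) t = (pattern P l t).map (addRightEmbedding (j : ZMod p)) := by
  have hiter (x : α) : P (T^[j] x) t = (P x t).map (addRightEmbedding (j : ZMod p)) := by
    induction j with
    | zero => ext; simp
    | succ j ih =>
      rw [Function.iterate_succ_apply', hP, ih, Finset.map_map]
      congr 1
      ext k
      simp [add_assoc]
  ext k
  simp only [mem_pattern, List.mem_map, exists_exists_and_eq_and, hiter, Finset.mem_map]
  exact ⟨fun ⟨x, hx, k', hk', h⟩ => ⟨k', ⟨x, hx, hk'⟩, h⟩,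
    fun ⟨k', ⟨x, hx, hk'⟩, h⟩ => ⟨x, hx, k', hk', h⟩⟩

end Patterns

section Labels

variable {p : ℕ} [Fact p.Prime] {α ι : Type*} {P : α → ι → Finset (ZMod p)}

/-- The mean of the members of `A`, an equivariant choice of an element of `ZMod p`; division by the
cardinality is meaningful only if `p` does not divide it. -/
def centroid (A : Finset (ZMod p)) : ZMod p :=
  (∑ k ∈ A, k) / A.card

open Classical in
/-- The centroid of a nonempty member of the family `S`, with junk value `0` if there is none. The
member is chosen from the set of indices of nonempty members alone, so translations respect it. -/
noncomputable def label (S : ι → Finset (ZMod p)) : ZMod p :=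
  if h : ∃ t, (S t).Nonempty then centroid (S h.choose) else 0

lemma centroid_map_add {A : Finset (ZMod p)} (hA : A.Nonempty)
    (hA' : A ≠ Finset.univ) (g : ZMod p) :
    centroid (A.map (addRightEmbedding g)) = centroid A + g := by
  have hcard : (A.card : ZMod p) ≠ 0 := by
    rw [Ne, ZMod.natCast_eq_zero_iff]
    exact Nat.not_dvd_of_pos_of_lt hA.card_pos (card_lt_of_ne_univ hA')
  simp only [centroid, Finset.sum_map, addRightEmbedding_apply, Finset.sum_add_distrib,
    Finset.sum_const, nsmul_eq_mul, Finset.card_map]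
  field_simp

lemma label_map_add {S : ι → Finset (ZMod p)} (hS : ∃ t, (S t).Nonempty)
    (hS' : ∀ t, S t ≠ Finset.univ) (g : ZMod p) :
    label (fun t => (S t).map (addRightEmbedding g)) = label S + g := by
  simp only [label, Finset.map_nonempty, hS, dif_pos]
  exact centroid_map_add hS.choose_spec (hS' _) g

lemma length_le_of_isChain_gt {L : List ℕ} {N : ℕ} (hL : L.IsChain (· > ·))
    (hmem : ∀ a ∈ L, a ∈ Finset.Icc 1 N) : L.length ≤ N := by
  have hnodup : L.Nodup := hL.pairwise.imp fun h => ne_of_gt h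
  calc L.length = L.toFinset.card := (List.toFinset_card_of_nodup hnodup).symm
    _ ≤ (Finset.Icc 1 N).card := Finset.card_le_card fun a ha => hmem a (List.mem_toFinset.mp ha)
    _ = N := by simp

lemma IsFlag.length_le_of_isChain_label_ne [Fintype ι] {l : List α}
    {L : List (List α)} (hL : IsFlag l L) (hne : ∀ x ∈ l, ∃ t, (P x t).Nonempty)
    (huniv : ∀ t, pattern P l t ≠ Finset.univ)
    (hchain : (L.map fun l' => label (pattern P l')).IsChain (· ≠ ·)) :
    L.length ≤ Fintype.card ι * (p - 1) := by
  have hdecr : (L.map fun l' => ∑ t, (pattern P l' t).card).IsChain (· > ·) := by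
    rw [List.isChain_map, List.isChain_iff_getElem] at hchain ⊢
    refine fun i hi => sum_card_pattern_lt ?_ fun h => hchain i hi (congrArg label h)
    exact (List.pairwise_iff_getElem.mp hL.pairwise i (i + 1) _ hi i.lt_succ_self).subset
  rw [← L.length_map fun l' => ∑ t, (pattern P l' t).card]
  refine length_le_of_isChain_gt hdecr ?_
  simp only [List.mem_map, forall_exists_index, and_imp, forall_apply_eq_imp_iff₂, Finset.mem_Icc]
  refine fun l' hl' => ⟨?_, ?_⟩
  · obtain ⟨x, hx⟩ := List.exists_mem_of_ne_nil l' (hL.ne_nil l' hl')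
    obtain ⟨t, k, hk⟩ := hne x ((hL.sublist l' hl').subset hx)
    exact (Finset.card_pos.mpr ⟨k, mem_pattern.mpr ⟨x, hx, hk⟩⟩).trans_le
      (Finset.single_le_sum (f := fun t => (pattern P l' t).card) (by simp) (Finset.mem_univ t))
  · refine Finset.sum_le_card_nsmul _ _ _ fun t _ => Nat.le_sub_one_of_lt ?_
    exact (Finset.card_le_card (pattern_mono (hL.sublist l' hl').subset t)).trans_lt
      (card_lt_of_ne_univ (huniv t))

/-- A form of Tucker's lemma for the cyclic group of order `p`. -/
theorem IsResolving.exists_pattern_eq_univ [Fintype ι] {T : α → α}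
    (hP : ∀ x t, P (T x) t = (P x t).map (addRightEmbedding 1))
    {h : ℕ → Chain (ZMod p) α} (hh : IsResolving p T (Fintype.card ι * (p - 1)) h)
    (hne : ∀ i ≤ Fintype.card ι * (p - 1), ∀ l ∈ (h i).support, ∀ x ∈ l, ∃ t, (P x t).Nonempty) :
    ∃ i ≤ Fintype.card ι * (p - 1), ∃ l ∈ (h i).support, ∃ t, pattern P l t = Finset.univ := by
  by_contra! huniv
  have hlabel : IsResolving p (· + 1) (Fintype.card ι * (p - 1)) fun i =>
      push (fun l => label (pattern P l)) (subdivision (i + 1) (h i)) := by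
    refine hh.subdivide fun i hi l hl l' hl' hl'_ne k => ?_
    obtain ⟨x, hx⟩ := List.exists_mem_of_ne_nil l' hl'_ne
    obtain ⟨t, c, hc⟩ := hne i hi l hl x (hl'.subset hx)
    rw [funext (pattern_map_iterate hP k l'), add_right_iterate, nsmul_one]
    refine label_map_add ⟨t, c, mem_pattern.mpr ⟨x, hx, hc⟩⟩ (fun t ht => huniv i hi l hl t ?_) _
    exact Finset.univ_subset_iff.mp (ht ▸ pattern_mono hl'.subset t)
  obtain ⟨l, hl, hchain⟩ := hlabel.exists_isChain_ne le_rfl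
  obtain ⟨l₀, hl₀, L, hL, rfl⟩ := hh.exists_isFlag_of_mem_support _ le_rfl hl
  have hle := hL.length_le_of_isChain_label_ne (hne _ le_rfl l₀ hl₀) (huniv _ le_rfl l₀ hl₀) hchain
  have hlen : l₀.length = _ := hh.homogeneous _ le_rfl hl₀
  rw [hL.length_eq, hlen] at hle
  omega

end Labels

section Peaks

variable {p : ℕ} [NeZero p]

/-- The indices at which `u` exceeds some other value of `u` by at least `ε`. -/
noncomputable def peaks (ε : ℝ) (u : ZMod p → ℝ) : Finset (ZMod p) :=
  open Classical in {k | ∃ k', u k' + ε ≤ u k}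

lemma mem_peaks {ε : ℝ} {u : ZMod p → ℝ} {k : ZMod p} : k ∈ peaks ε u ↔ ∃ k', u k' + ε ≤ u k := by
  simp [peaks]

lemma peaks_comp_sub_one (ε : ℝ) (u : ZMod p → ℝ) :
    peaks ε (fun k => u (k - 1)) = (peaks ε u).map (addRightEmbedding 1) := by
  ext k
  simp only [mem_peaks, Finset.mem_map, addRightEmbedding_apply]
  constructor
  · rintro ⟨k', h⟩
    exact ⟨k - 1, ⟨k' - 1, h⟩, sub_add_cancel k 1⟩
  · rintro ⟨k, ⟨k', h⟩, rfl⟩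
    exact ⟨k' + 1, by simpa using h⟩

variable {α ι : Type*}

lemma pattern_peaks_ne_univ {ε : ℝ} {f : α → ι → ZMod p → ℝ} {l : List α} (hl : l ≠ [])
    (hf : ∀ x ∈ l, ∀ y ∈ l, ∀ t k, |f x t k - f y t k| < ε / 2) (t : ι) :
    pattern (fun x t => peaks ε (f x t)) l t ≠ Finset.univ := by
  intro huniv
  obtain ⟨y, hy⟩ := List.exists_mem_of_ne_nil l hl
  obtain ⟨k, hk⟩ := Finite.exists_min (f y t)
  obtain ⟨x, hx, hkx⟩ := mem_pattern.mp (huniv ▸ Finset.mem_univ k)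
  obtain ⟨k', hk'⟩ := mem_peaks.mp hkx
  have hdiff := abs_lt.mp (hf x hx y hy t k)
  have hdiff' := abs_lt.mp (hf x hx y hy t k')
  linarith [hk k']

end Peaks

section EqualValues

variable {ι κ : Type*}

lemma exists_pos_forall_add_le [Finite ι] {γ : Type*} [Finite γ] {α : Type*} [TopologicalSpace α]
    {C : Set α} (hC : IsCompact C) {f : α → ι → γ → ℝ} (hf : Continuous f)
    (hne : ∀ x ∈ C, ∃ t k k', f x t k ≠ f x t k') :
    ∃ ε > 0, ∀ x ∈ C, ∃ t k k', f x t k' + ε ≤ f x t k := by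
  have := Fintype.ofFinite ι
  have := Fintype.ofFinite γ
  let G : α → ι → γ → γ → ℝ := fun x t k k' => f x t k - f x t k'
  have hG : Continuous fun x => ‖G x‖ := by fun_prop
  have hpos (x) (hx : x ∈ C) : 0 < ‖G x‖ := by
    obtain ⟨t, k, k', h⟩ := hne x hx
    exact norm_pos_iff.mpr fun h0 => h (sub_eq_zero.mp (congrFun₃ h0 t k k'))
  obtain ⟨ε, hε, hεG⟩ := hC.exists_forall_le' hG.continuousOn hpos
  refine ⟨ε, hε, fun x hx => ?_⟩
  by_contra! hlt
  refine (hεG x hx).not_gt ?_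
  simp only [pi_norm_lt_iff hε, Real.norm_eq_abs, abs_sub_lt_iff, G, sub_lt_iff_lt_add']
  exact fun t k k' => ⟨hlt t k k', hlt t k' k⟩

/-- A Borsuk–Ulam theorem for the cyclic group of order `p`. -/
theorem exists_ne_and_forall_eq {p : ℕ} [Fact p.Prime] [Fintype ι] [Fintype κ]
    (hcard : Fintype.card ι < Fintype.card κ)
    {f : (ZMod p → κ → ℝ) → ι → ZMod p → ℝ} (hf : Continuous f)
    (hf_shift : ∀ x t k, f (shift p κ x) t k = f x t (k - 1)) :
    ∃ x, (∃ k k', x k ≠ x k') ∧ ∀ t k k', f x t k = f x t k' := by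
  by_contra! hne
  have hC := isCompact_iUnion_face p κ
  obtain ⟨ε, hε, hgap⟩ := exists_pos_forall_add_le hC hf fun x hx =>
    hne x (exists_ne_of_mem_face (Set.mem_iUnion.mp hx).choose_spec)
  obtain ⟨δ, hδ, hfδ⟩ := Metric.uniformContinuousOn_iff_le.mp
    (hC.uniformContinuousOn_of_continuous hf.continuousOn) (ε / 4) (by positivity)
  have hN : Fintype.card ι * (p - 1) < Fintype.card κ * (p - 1) :=
    Nat.mul_lt_mul_of_pos_right hcard (Nat.sub_pos_of_lt (Fact.out : p.Prime).one_lt)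
  obtain ⟨h, hh, hsmall⟩ := exists_isResolving_isSmall (ZMod p) hN hδ
  have hmem {i} (hi : i ≤ Fintype.card ι * (p - 1)) {l} (hl : l ∈ (h i).support) {x} (hx : x ∈ l) :
      x ∈ ⋃ c : κ → ZMod p, face c := by
    obtain ⟨_, ⟨c, rfl⟩, hlc⟩ := (hsmall i hi l hl).1
    exact Set.mem_iUnion_of_mem c (hlc x hx)
  obtain ⟨i, hi, l, hl, t, huniv⟩ :=
    hh.exists_pattern_eq_univ (P := fun x t => peaks ε (f x t))
      (fun x t => by rw [← peaks_comp_sub_one, ← funext (hf_shift x t)])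
      fun i hi l hl x hx =>
        let ⟨t, k, hk⟩ := hgap x (hmem hi hl hx)
        ⟨t, k, mem_peaks.mpr hk⟩
  refine pattern_peaks_ne_univ ?_ (fun x hx y hy t k => ?_) t huniv
  · exact List.ne_nil_of_length_eq_add_one (hh.homogeneous i hi hl)
  · have hdist := hfδ x (hmem hi hl hx) y (hmem hi hl hy) ((hsmall i hi l hl).2 x hx y hy)
    rw [dist_pi_le_iff (by positivity)] at hdist
    have := (dist_pi_le_iff (by positivity)).mp (hdist t) k
    rw [Real.dist_eq] at this
    linarith

end EqualValues

end BorsukUlam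

namespace EquilateralPolygons

variable {p : ℕ} {α : Type*} {x : ZMod p → α}

lemma injective_of_forall_ne_add [NeZero p]
    (hx : ∀ t : ℕ, 1 ≤ t → t ≤ p / 2 → ∀ k, x k ≠ x (k + t)) : Function.Injective x := by
  intro a b hab
  by_contra hne
  have hpos : 1 ≤ (b - a).valMinAbs.natAbs := by
    simpa [Nat.one_le_iff_ne_zero, sub_eq_zero] using Ne.symm hne
  have hle := (b - a).natAbs_valMinAbs_le
  have hcast := (b - a).natCast_natAbs_valMinAbs
  split_ifs at hcast
  · exact hx _ hpos hle a (by rw [hcast, add_sub_cancel, hab])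
  · exact hx _ hpos hle b (by rw [hcast, neg_sub, add_sub_cancel, hab])

lemma eq_of_periodic [Fact p.Prime] {c : ZMod p} (hx : Function.Periodic x c) (hc : c ≠ 0)
    (k k' : ZMod p) : x k = x k' := by
  have h := hx.nsmul ((k' - k) / c).val k
  rwa [nsmul_eq_mul, ZMod.natCast_zmod_val, div_mul_cancel₀ _ hc, add_sub_cancel, eq_comm] at h

lemma ne_add_of_forall_eq [Fact p.Prime] {ρ : α → α → ℝ} (hρ : ∀ x y, ρ x y = 0 ↔ x = y)
    (hne : ∃ k k', x k ≠ x k') {c : ZMod p} (hc : c ≠ 0)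
    (hx : ∀ k k', ρ (x k) (x (k + c)) = ρ (x k') (x (k' + c))) (k : ZMod p) : x k ≠ x (k + c) := by
  intro hk
  obtain ⟨i, j, hij⟩ := hne
  refine hij (eq_of_periodic (fun k' => ?_) hc i j)
  exact ((hρ _ _).mp ((hx k' k).trans ((hρ _ _).mpr hk))).symm

lemma exists_ne_and_forall_eq {E : Type*} [AddCommGroup E] [Module ℝ E] [TopologicalSpace E]
    [IsTopologicalAddGroup E] [ContinuousSMul ℝ E] [Fact p.Prime]
    (hE : ((p / 2 : ℕ) : Cardinal) < Module.rank ℝ E)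
    {ρ : ℕ → E → E → ℝ} (hρ : ∀ t, Continuous fun z : E × E => ρ t z.1 z.2) :
    ∃ x : ZMod p → E, (∃ k k', x k ≠ x k') ∧ ∀ t : ℕ, 1 ≤ t → t ≤ p / 2 →
      ∀ k k', ρ t (x k) (x (k + t)) = ρ t (x k') (x (k' + t)) := by
  have hrank : ((p / 2 + 1 : ℕ) : Cardinal) ≤ Module.rank ℝ E := by
    rwa [Nat.cast_succ, Cardinal.natCast_add_one_le_iff]
  obtain ⟨g, hg⟩ := Module.le_rank_iff_exists_linearMap.mp hrank
  have hg_cont := g.continuous_of_finiteDimensional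
  obtain ⟨x, ⟨k, k', hne⟩, hx⟩ := BorsukUlam.exists_ne_and_forall_eq (p := p)
    (ι := Finset.Icc 1 (p / 2)) (κ := Fin (p / 2 + 1)) (by simp)
    (f := fun x t k => ρ t (g (x k)) (g (x (k + (t : ℕ)))))
    (continuous_pi fun t => continuous_pi fun k => (hρ t).comp₂ (by fun_prop) (by fun_prop))
    (fun x t k => by simp only [BorsukUlam.shift_apply, sub_add_eq_add_sub])
  exact ⟨g ∘ x, ⟨k, k', hg.ne hne⟩, fun t h1 ht => hx ⟨t, Finset.mem_Icc.mpr ⟨h1, ht⟩⟩⟩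

end EquilateralPolygons

theorem exists_pgons_all_equilateral_one_metric_general {E : Type*} [AddCommGroup E]
    [Module ℝ E] [TopologicalSpace E] [IsTopologicalAddGroup E] [ContinuousSMul ℝ E] {p : ℕ}
    (hp : p.Prime) (hE : ((p / 2 : ℕ) : Cardinal) < Module.rank ℝ E) {ρ : ℕ → E → E → ℝ}
    (hρ_cont : ∀ t, Continuous fun z : E × E => ρ t z.1 z.2)
    (hρ_zero : ∀ t x y, ρ t x y = 0 ↔ x = y) :
    ∃ x : ZMod p → E, Function.Injective x ∧ ∀ t : ℕ, 1 ≤ t → t ≤ p / 2 →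
      ∀ k : ZMod p, ρ t (x (k * t)) (x ((k + 1) * t)) = ρ t (x 0) (x t) := by
  have : Fact p.Prime := ⟨hp⟩
  obtain ⟨x, hne, hx⟩ := EquilateralPolygons.exists_ne_and_forall_eq hE hρ_cont
  have hcast {t : ℕ} (h1 : 1 ≤ t) (ht : t ≤ p / 2) : (t : ZMod p) ≠ 0 := by
    have := hp.two_le
    rw [Ne, ZMod.natCast_eq_zero_iff]
    exact Nat.not_dvd_of_pos_of_lt h1 (by omega)
  refine ⟨x, EquilateralPolygons.injective_of_forall_ne_add fun t h1 ht => ?_, fun t h1 ht k => ?_⟩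
  · exact EquilateralPolygons.ne_add_of_forall_eq (hρ_zero t) hne (hcast h1 ht) (hx t h1 ht)
  · simpa only [add_one_mul, zero_add] using hx t h1 ht (k * t) 0

lemma IsMetricEquivToStd.continuous {E : Type*} [TopologicalSpace E] {ρ : E → E → ℝ}
    (hρ : IsMetricEquivToStd ρ) : Continuous fun z : E × E => ρ z.1 z.2 := by
  obtain ⟨hsymm, hzero, htri, hopen⟩ := hρ
  have hball (x : E) (ε : ℝ) (hε : 0 < ε) : ∀ᶠ y in nhds x, ρ x y < ε := by
    refine IsOpen.mem_nhds ((hopen {y | ρ x y < ε}).mpr fun y hy => ?_) (by simpa [(hzero x x).mpr])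
    refine ⟨ε - ρ x y, sub_pos.mpr hy, fun z hz => ?_⟩
    rw [Set.mem_ofPred_eq] at hz ⊢
    linarith [htri x y z]
  rw [continuous_iff_continuousAt]
  rintro ⟨x, y⟩
  rw [ContinuousAt, Metric.tendsto_nhds]
  intro ε hε
  rw [nhds_prod_eq]
  filter_upwards [(hball x (ε / 2) (half_pos hε)).prod_mk (hball y (ε / 2) (half_pos hε))]
  rintro ⟨x', y'⟩ ⟨hx, hy⟩
  rw [Real.dist_eq, abs_sub_lt_iff]
  constructor
  · linarith [htri x' x y', htri x y y', hsymm x x']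
  · linarith [htri x x' y, htri x' y' y, hsymm y y']

/-- Corollary: for `d > (p-1)/2` and a single metric `ρ` equivalent to the Euclidean
metric, there are `p` distinct points such that every `p`-gon `C_t`,
`t = 1, …, (p-1)/2`, is `ρ`-equilateral. -/
theorem exists_pgons_all_equilateral_one_metric
    (p d : ℕ) (hp : p.Prime) (hodd : Odd p) (hd : 0 < d) (hdr : d > (p - 1) / 2)
    (ρ : EuclideanSpace ℝ (Fin d) → EuclideanSpace ℝ (Fin d) → ℝ)
    (hρ : IsMetricEquivToStd ρ) :
    ∃ x : ZMod p → EuclideanSpace ℝ (Fin d),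
      Function.Injective x ∧
      ∀ t : ℕ, 1 ≤ t → t ≤ (p - 1) / 2 →
        ∀ k : ZMod p,
          ρ (x (k * (t : ZMod p))) (x ((k + 1) * (t : ZMod p))) =
            ρ (x 0) (x (t : ZMod p)) := by
  have hhalf : (p - 1) / 2 = p / 2 := by grind
  rw [hhalf] at hdr ⊢
  have hE : ((p / 2 : ℕ) : Cardinal) < Module.rank ℝ (EuclideanSpace ℝ (Fin d)) := by
    rwa [← Module.finrank_eq_rank, finrank_euclideanSpace_fin, Nat.cast_lt]
  exact exists_pgons_all_equilateral_one_metric_general hp hE (fun _ => hρ.continuous)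
    fun _ => hρ.2.1
end

section
/- Let p be an odd prime, let d and r be positive integers with d > r, and let ρ₁, ρ₂, …, ρᵣ be metrics on ℝᵈ each of which induces the standard (Euclidean) topology of ℝᵈ. Then there exists an r-equilateral p-gon in ℝᵈ with respect to ρ₁, …, ρᵣ: that is, there exist p distinct points x₀, x₁, …, x_{p−1} in ℝᵈ such that for each i = 1, …, r there is a constant cᵢ > 0 with ρᵢ(x_k, x_{k+1}) = cᵢ for all k = 0, 1, …, p−1 (indices mod p). -/
/-!
Suppose that no injective `p`-tuple equalises the given functions along its cyclic shifts, and let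
`K` be the join of `d * (p - 1)` orbits of the cyclic shift acting on tuples of points of the
standard simplex; no tuple in `K` is constant. A family of nearby tuples in `K` then receives an
equivariant label that is moved by every nonzero element of `ℤ/p`: either some function clearly
exceeds its mean for a proper nonempty set of the shifts, or two points of the tuples are close and
the tuples split into at least two, but fewer than `p`, clusters. Enlarging a family strictly raises
a rank, made of the sizes of these sets and the number of merged points, which takes only
`r * (p - 1) + (p - 2)` positive values.

A Borsuk–Ulam argument shows that this is too few. The standard resolution of `ℤ/p` is realised by
simplices in `K`, which iterated barycentric subdivision makes small. Choosing a point in each free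
orbit turns the labels into elements of `ℤ/p`, so that the barycentric subdivision once more maps
equivariantly to the chains of `ℤ/p`. If every flag of faces in the top dimension had two
consecutive equal labels, the image of the top chain of the resolution would be degenerate, against
the nonvanishing of the cohomology of `ℤ/p` in that degree. Hence some flag of `d * (p - 1)` small
simplices has strictly monotone ranks, although `r * (p - 1) + (p - 2) < d * (p - 1)`.
-/

/-- Formal `R`-linear combinations of words in the alphabet `α`. They play the role of simplicial
chains: a word is an ordered, possibly degenerate, simplex, and the empty word is the generator of
the augmentation degree. -/
abbrev WordChain (R : Type*) [CommRing R] (α : Type*) : Type _ := List α →₀ R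

namespace WordChain

open Finsupp

section Supported

variable {R ι M : Type*} [CommRing R] [AddCommGroup M] [Module R M] {S : Set ι}

lemma supported_le_iff {q : Submodule R (ι →₀ R)} :
    supported R R S ≤ q ↔ ∀ i ∈ S, single i 1 ∈ q := by
  rw [supported_eq_span_single, Submodule.span_le, Set.image_subset_iff]
  rfl

lemma map_mem_of_mem_supported {q : Submodule R M} {f : (ι →₀ R) →ₗ[R] M}
    (h : ∀ i ∈ S, f (single i 1) ∈ q) {x : ι →₀ R} (hx : x ∈ supported R R S) : f x ∈ q :=
  supported_le_iff (q := q.comap f).2 h hx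

lemma map_eq_map_of_mem_supported {f g : (ι →₀ R) →ₗ[R] M}
    (h : ∀ i ∈ S, f (single i 1) = g (single i 1)) {x : ι →₀ R} (hx : x ∈ supported R R S) :
    f x = g x :=
  supported_le_iff (q := LinearMap.eqLocus f g).2 h hx

end Supported

section Boundary

variable {R : Type*} [CommRing R] {α β γ : Type*}

/-- The cone with apex `v`: it prepends the letter `v` to every word. -/
noncomputable def cone (v : α) : WordChain R α →ₗ[R] WordChain R α :=
  lmapDomain R R (List.cons v)

/-- The chain map induced by a map of alphabets. -/
noncomputable def mapWord (f : α → β) : WordChain R α →ₗ[R] WordChain R β :=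
  lmapDomain R R (List.map f)

/-- The boundary operator of the augmented simplicial chain complex. -/
noncomputable def boundary : WordChain R α →ₗ[R] WordChain R α :=
  linearCombination R fun l => ∑ i : Fin l.length, (-1) ^ (i : ℕ) • single (l.eraseIdx i) 1

@[simp] lemma cone_single (v : α) (l : List α) (c : R) :
    cone v (single l c) = single (v :: l) c :=
  mapDomain_single

@[simp] lemma mapWord_single (f : α → β) (l : List α) (c : R) :
    mapWord f (single l c) = single (l.map f) c :=
  mapDomain_single

lemma mapWord_mapWord (f : α → β) (g : β → γ) (x : WordChain R α) :
    mapWord g (mapWord f x) = mapWord (g ∘ f) x := by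
  suffices mapWord g ∘ₗ mapWord f = mapWord (R := R) (g ∘ f) from LinearMap.congr_fun this x
  ext l : 2
  simp

lemma mapWord_cone (f : α → β) (v : α) (x : WordChain R α) :
    mapWord f (cone v x) = cone (f v) (mapWord f x) := by
  suffices mapWord f ∘ₗ cone v = cone (R := R) (f v) ∘ₗ mapWord f from LinearMap.congr_fun this x
  ext l : 2
  simp

lemma cone_mem_supported {v : α} {S T : Set (List α)} (h : ∀ w ∈ S, v :: w ∈ T)
    {x : WordChain R α} (hx : x ∈ supported R R S) : cone v x ∈ supported R R T :=
  map_mem_of_mem_supported (fun w hw => by simpa using single_mem_supported R 1 (h w hw)) hx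

lemma mapWord_mem_supported {f : α → β} {S : Set (List α)} {T : Set (List β)}
    (h : ∀ w ∈ S, w.map f ∈ T) {x : WordChain R α} (hx : x ∈ supported R R S) :
    mapWord f x ∈ supported R R T :=
  map_mem_of_mem_supported (fun w hw => by simpa using single_mem_supported R 1 (h w hw)) hx

lemma boundary_single (l : List α) :
    boundary (single l (1 : R)) =
      ∑ i : Fin l.length, (-1) ^ (i : ℕ) • single (l.eraseIdx i) 1 := by
  simp [boundary]

@[simp] lemma boundary_single_nil (c : R) : boundary (single ([] : List α) c) = 0 := by
  simp [boundary]

lemma boundary_cone (v : α) (x : WordChain R α) :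
    boundary (cone v x) = x - cone v (boundary x) := by
  suffices boundary ∘ₗ cone v = LinearMap.id - cone (R := R) v ∘ₗ boundary from
    LinearMap.congr_fun this x
  ext l : 2
  simp [boundary_single, Fin.sum_univ_succ, pow_succ, sub_eq_add_neg]

lemma boundary_single_cons (v : α) (l : List α) (c : R) :
    boundary (single (v :: l) c) = single l c - cone v (boundary (single l c)) := by
  rw [← cone_single, boundary_cone]

lemma boundary_boundary (x : WordChain R α) : boundary (boundary x) = 0 := by
  suffices boundary ∘ₗ boundary = (0 : WordChain R α →ₗ[R] WordChain R α) from
    LinearMap.congr_fun this x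
  ext l : 2
  induction l with
  | nil => simp
  | cons v l ih => simp_all [boundary_single_cons, boundary_cone]

lemma boundary_mapWord (f : α → β) (x : WordChain R α) :
    boundary (mapWord f x) = mapWord f (boundary x) := by
  suffices boundary ∘ₗ mapWord f = mapWord (R := R) f ∘ₗ boundary from LinearMap.congr_fun this x
  ext l : 2
  induction l with
  | nil => simp
  | cons v l ih => simp_all [boundary_single_cons, mapWord_cone]

lemma boundary_single_mem_supported (l : List α) :
    boundary (single l (1 : R)) ∈
      supported R R {w | w.Sublist l ∧ w.length + 1 = l.length} := by
  rw [boundary_single]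
  refine Submodule.sum_mem _ fun i _ => Submodule.smul_of_tower_mem _ _ ?_
  refine single_mem_supported R 1 ⟨List.eraseIdx_sublist l i, ?_⟩
  rw [List.length_eraseIdx_of_lt i.2, Nat.sub_add_cancel i.pos]

end Boundary

section Subdivision

variable {R : Type*} [CommRing R] {α β : Type*}

/-- An acyclic-models principle. -/
lemma linearMap_ext_of_boundary {M : Type*} [AddCommGroup M] [Module R M]
    {f g : WordChain R α →ₗ[R] M} (hnil : f (single [] 1) = g (single [] 1))
    (hcons : ∀ v l, f (boundary (single (v :: l) 1)) = g (boundary (single (v :: l) 1)) →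
      f (single (v :: l) 1) = g (single (v :: l) 1)) : f = g := by
  suffices h : ∀ n, ∀ l : List α, l.length = n → f (single l 1) = g (single l 1) by
    ext l : 2
    exact h _ l rfl
  intro n
  induction n using Nat.strong_induction_on with
  | _ n ih =>
    rintro (_ | ⟨v, l⟩) rfl
    · exact hnil
    · refine hcons v l (map_eq_map_of_mem_supported (fun w hw => ?_)
        (boundary_single_mem_supported (v :: l)))
      exact ih w.length (hw.2 ▸ w.length.lt_succ_self) w rfl

/-- The barycentric subdivision of a word, in the alphabet of words: the cone, with apex the word
itself, over the subdivision of its boundary. -/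
noncomputable def subdivideWord (R : Type*) [CommRing R] : List α → WordChain R (List α)
  | [] => single [] 1
  | v :: l => cone (v :: l)
      (∑ i : Fin (l.length + 1), (-1) ^ (i : ℕ) • subdivideWord R ((v :: l).eraseIdx i))
  termination_by l => l.length
  decreasing_by rw [List.length_eraseIdx_of_lt i.2]; simp

/-- The barycentric subdivision operator, with values in chains of flags of faces. -/
noncomputable def subdivide : WordChain R α →ₗ[R] WordChain R (List α) :=
  linearCombination R (subdivideWord R)

@[simp] lemma subdivide_single_nil : subdivide (single ([] : List α) (1 : R)) = single [] 1 := by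
  simp [subdivide, subdivideWord]

lemma subdivide_single_cons (v : α) (l : List α) :
    subdivide (single (v :: l) (1 : R)) =
      cone (v :: l) (subdivide (boundary (single (v :: l) 1))) := by
  rw [boundary_single, subdivide, linearCombination_single, one_smul, subdivideWord]
  simp only [map_sum, map_zsmul, linearCombination_single, one_smul]
  rfl

lemma boundary_subdivide (x : WordChain R α) : boundary (subdivide x) = subdivide (boundary x) := by
  suffices boundary ∘ₗ subdivide = subdivide (R := R) (α := α) ∘ₗ boundary from
    LinearMap.congr_fun this x
  refine linearMap_ext_of_boundary (by simp) fun v l h => ?_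
  simp_all [subdivide_single_cons, boundary_cone, boundary_boundary]

lemma subdivide_mapWord (f : α → β) (x : WordChain R α) :
    subdivide (mapWord f x) = mapWord (List.map f) (subdivide x) := by
  suffices subdivide ∘ₗ mapWord f = mapWord (R := R) (List.map f) ∘ₗ subdivide from
    LinearMap.congr_fun this x
  refine linearMap_ext_of_boundary (by simp) fun v l h => ?_
  simp only [LinearMap.comp_apply] at h ⊢
  rw [subdivide_single_cons, mapWord_cone, ← h, ← boundary_mapWord, mapWord_single, List.map_cons,
    subdivide_single_cons]

/-- `w` is a flag of nonempty faces of `l`, in descending order, with as many members as `l` has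
vertices. -/
def IsFlag (l : List α) (w : List (List α)) : Prop :=
  w.length = l.length ∧ (∀ m ∈ w, m.Sublist l ∧ m ≠ []) ∧ w.Pairwise fun a b => b.Sublist a

lemma IsFlag.cons {l m : List α} {w : List (List α)} (hw : IsFlag m w) (hm : m.Sublist l)
    (hlen : m.length + 1 = l.length) : IsFlag l (l :: w) := by
  obtain ⟨h1, h2, h3⟩ := hw
  have hsub : ∀ a ∈ w, a.Sublist l ∧ a ≠ [] := fun a ha => ⟨(h2 a ha).1.trans hm, (h2 a ha).2⟩
  have hl : l ≠ [] := List.ne_nil_of_length_eq_add_one hlen.symm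
  exact ⟨by simp [h1, hlen], List.forall_mem_cons.2 ⟨⟨.refl l, hl⟩, hsub⟩,
    List.pairwise_cons.2 ⟨fun a ha => (hsub a ha).1, h3⟩⟩

lemma subdivide_single_mem_supported (l : List α) :
    subdivide (single l (1 : R)) ∈ supported R R {w | IsFlag l w} := by
  induction hn : l.length using Nat.strong_induction_on generalizing l with
  | _ n ih =>
    subst hn
    obtain _ | ⟨v, l⟩ := l
    · rw [subdivide_single_nil]
      exact single_mem_supported R 1 ⟨rfl, by simp, .nil⟩
    rw [subdivide_single_cons]
    refine cone_mem_supported (S := {w | IsFlag (v :: l) (_ :: w)}) (fun w hw => hw) ?_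
    refine map_mem_of_mem_supported (fun m hm => ?_) (boundary_single_mem_supported (v :: l))
    obtain ⟨hsub, hlen⟩ := hm
    exact supported_mono (fun w hw => hw.cons hsub hlen) (ih m.length (by omega) m rfl)

end Subdivision

section Periodic

variable {R : Type*} [CommRing R] {M M' : Type*} [AddCommGroup M] [Module R M]
  [AddCommGroup M'] [Module R M']

/-- The differentials of the periodic free resolution of the trivial module over the group ring of
a cyclic group of order `p` with generator `T`: the norm in odd degrees, `T - 1` in even degrees. -/
noncomputable def periodicDiff (p : ℕ) (T : Module.End R M) (k : ℕ) : Module.End R M :=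
  if Odd k then ∑ t ∈ Finset.range p, T ^ t else T - 1

lemma periodicDiff_of_odd {p k : ℕ} (T : Module.End R M) (hk : Odd k) :
    periodicDiff p T k = ∑ t ∈ Finset.range p, T ^ t :=
  if_pos hk

lemma periodicDiff_of_even {p k : ℕ} (T : Module.End R M) (hk : Even k) :
    periodicDiff p T k = T - 1 :=
  if_neg (Nat.not_odd_iff_even.2 hk)

lemma periodicDiff_succ_mul {p : ℕ} {T : Module.End R M} (hT : T ^ p = 1) (k : ℕ) :
    periodicDiff p T (k + 1) * periodicDiff p T k = 0 := by
  rcases Nat.even_or_odd k with h | h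
  · rw [periodicDiff_of_odd T h.add_one, periodicDiff_of_even T h, geom_sum_mul, hT, sub_self]
  · rw [periodicDiff_of_even T h.add_one, periodicDiff_of_odd T h, mul_geom_sum, hT, sub_self]

lemma periodicDiff_apply_mem {p k : ℕ} {T : Module.End R M} {S : Submodule R M}
    (h : ∀ x ∈ S, T x ∈ S) {x : M} (hx : x ∈ S) : periodicDiff p T k x ∈ S := by
  rcases Nat.even_or_odd k with hk | hk
  · rw [periodicDiff_of_even T hk]
    exact S.sub_mem (h x hx) hx
  · rw [periodicDiff_of_odd T hk, LinearMap.sum_apply]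
    exact S.sum_mem fun t _ => Module.End.pow_apply_mem_of_forall_mem t h x hx

lemma map_pow_apply_of_mem {f : M →ₗ[R] M'} {T : Module.End R M} {T' : Module.End R M'}
    {S : Submodule R M} (hS : ∀ x ∈ S, T x ∈ S) (h : ∀ x ∈ S, f (T x) = T' (f x)) (t : ℕ) {x : M}
    (hx : x ∈ S) : f ((T ^ t) x) = (T' ^ t) (f x) := by
  induction t with
  | zero => simp
  | succ t ih =>
    simp only [pow_succ', Module.End.mul_apply,
      h _ (Module.End.pow_apply_mem_of_forall_mem t hS x hx), ih]

lemma map_periodicDiff_of_mem {f : M →ₗ[R] M'} {T : Module.End R M} {T' : Module.End R M'}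
    {S : Submodule R M} (hS : ∀ x ∈ S, T x ∈ S) (h : ∀ x ∈ S, f (T x) = T' (f x)) (p k : ℕ) {x : M}
    (hx : x ∈ S) : f (periodicDiff p T k x) = periodicDiff p T' k (f x) := by
  rcases Nat.even_or_odd k with hk | hk
  · simp [periodicDiff_of_even _ hk, h x hx]
  · simp [periodicDiff_of_odd _ hk, LinearMap.sum_apply, map_pow_apply_of_mem hS h _ hx]

lemma map_periodicDiff {f : M →ₗ[R] M'} {T : Module.End R M} {T' : Module.End R M'}
    (h : ∀ x, f (T x) = T' (f x)) (p k : ℕ) (x : M) :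
    f (periodicDiff p T k x) = periodicDiff p T' k (f x) :=
  map_periodicDiff_of_mem (S := ⊤) (by simp) (fun x _ => h x) p k trivial

end Periodic

section Degenerate

variable {R : Type*} [CommRing R] {α β : Type*}

/-- The degenerate chains, spanned by the empty word and the words with two equal consecutive
letters. Linear forms that vanish on it are normalized reduced cochains. -/
noncomputable def degenerate (R : Type*) [CommRing R] (α : Type*) : Submodule R (WordChain R α) :=
  supported R R {w | w = [] ∨ ¬ w.IsChain (· ≠ ·)}

lemma single_mem_degenerate {w : List α} (hw : w = [] ∨ ¬ w.IsChain (· ≠ ·)) (c : R) :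
    single w c ∈ degenerate R α :=
  single_mem_supported R c hw

lemma degenerate_le_iff {q : Submodule R (WordChain R α)} :
    degenerate R α ≤ q ↔ ∀ w : List α, (w = [] ∨ ¬ w.IsChain (· ≠ ·)) → single w 1 ∈ q :=
  supported_le_iff

lemma mapWord_mem_degenerate {f : α → β} (hf : f.Injective) {x : WordChain R α}
    (hx : x ∈ degenerate R α) : mapWord f x ∈ degenerate R β :=
  mapWord_mem_supported (fun w hw => by simpa [List.isChain_map, hf.eq_iff] using hw) hx

lemma boundary_single_mem_of_not_isChain {w : List α} (hw : ¬ w.IsChain (· ≠ ·)) :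
    boundary (single w (1 : R)) ∈ supported R R {w | ¬ w.IsChain (· ≠ ·)} := by
  induction w with
  | nil => simp at hw
  | cons a w ih =>
    obtain _ | ⟨b, w⟩ := w
    · simp at hw
    by_cases hchain : (b :: w).IsChain (· ≠ ·)
    · obtain rfl : a = b := by simpa [List.isChain_cons_cons, hchain] using hw
      rw [boundary_single_cons, boundary_single_cons, map_sub, cone_single, sub_sub_cancel]
      refine cone_mem_supported (S := {w | ∃ w', w = a :: w'}) (by rintro _ ⟨w', rfl⟩; simp) ?_
      refine cone_mem_supported (S := Set.univ) (fun w _ => ?_) (by simp)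
      exact ⟨w, rfl⟩
    · rw [boundary_single_cons]
      refine Submodule.sub_mem _ (single_mem_supported R 1 hchain) ?_
      refine cone_mem_supported (fun w hw => ?_) (ih hchain)
      exact fun h => hw h.tail

lemma boundary_mem_degenerate {x : WordChain R α} (hx : x ∈ degenerate R α) :
    boundary x ∈ degenerate R α := by
  refine map_mem_of_mem_supported (fun w hw => ?_) hx
  obtain rfl | hw := hw
  · simp
  · exact supported_mono (fun _ => Or.inr) (boundary_single_mem_of_not_isChain hw)

end Degenerate

section Rotation

variable {p : ℕ} {R : Type*} [CommRing R] {M : Type*} [AddCommGroup M] [Module R M]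

/-- The generator of the cyclic group `ZMod p` acting on the chains of words with letters in
`ZMod p`. -/
noncomputable def rotate (p : ℕ) (R : Type*) [CommRing R] : Module.End R (WordChain R (ZMod p)) :=
  mapWord (· + 1)

lemma rotate_pow_single (t : ℕ) (w : List (ZMod p)) (c : R) :
    (rotate p R ^ t) (single w c) = single (w.map (· + (t : ZMod p))) c := by
  induction t with
  | zero => simp
  | succ t ih =>
    rw [pow_succ', Module.End.mul_apply, ih, rotate, mapWord_single, List.map_map]
    simp [Function.comp_def, add_assoc]

lemma rotate_mem_degenerate {x : WordChain R (ZMod p)} (hx : x ∈ degenerate R (ZMod p)) :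
    rotate p R x ∈ degenerate R (ZMod p) :=
  mapWord_mem_degenerate (add_left_injective 1) hx

variable [NeZero p]

lemma sum_range_val_add_one {F : ℕ → M} (hF : ∑ t ∈ Finset.range p, F t = 0) (a : ZMod p) :
    ∑ t ∈ Finset.range (a + 1).val, F t = ∑ t ∈ Finset.range a.val, F t + F a.val := by
  have ha : a + 1 = ((a.val + 1 : ℕ) : ZMod p) := by simp
  rw [← Finset.sum_range_succ, ha]
  rcases (show a.val + 1 ≤ p from ZMod.val_lt a).lt_or_eq with hlt | heq
  · rw [ZMod.val_cast_of_lt hlt]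
  · rw [heq, hF, ZMod.natCast_self, ZMod.val_zero, Finset.sum_range_zero]

/-- The nonempty words starting with `0` form a basis of the nonempty words over the group ring, so
an invariant form is the norm of its restriction to them. -/
lemma exists_comp_norm_eq {f : WordChain R (ZMod p) →ₗ[R] M}
    (hf : degenerate R (ZMod p) ≤ LinearMap.ker f) (hinv : ∀ x, f (rotate p R x) = f x) :
    ∃ u : WordChain R (ZMod p) →ₗ[R] M, degenerate R (ZMod p) ≤ LinearMap.ker u ∧
      ∀ x, u ((∑ t ∈ Finset.range p, rotate p R ^ t) x) = f x := by
  have hmap (t : ℕ) (w : List (ZMod p)) :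
      f (single (w.map (· + (t : ZMod p))) 1) = f (single w 1) := by
    rw [← rotate_pow_single]
    simpa using map_pow_apply_of_mem (S := ⊤) (T' := 1) (by simp) (fun x _ => hinv x) t
      (Submodule.mem_top (x := single w (1 : R)))
  have hf0 {w : List (ZMod p)} (hw : w = [] ∨ ¬ w.IsChain (· ≠ ·)) : f (single w 1) = 0 :=
    hf (single_mem_degenerate hw 1)
  let u : WordChain R (ZMod p) →ₗ[R] M :=
    linearCombination R fun w => if w.head? = some 0 then f (single w 1) else 0
  refine ⟨u, degenerate_le_iff.2 fun w hw => by simp [u, hf0 hw], fun x => ?_⟩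
  suffices u ∘ₗ (∑ t ∈ Finset.range p, rotate p R ^ t) = f from LinearMap.congr_fun this x
  ext w : 2
  simp only [lsingle_apply, LinearMap.comp_apply, LinearMap.sum_apply, map_sum, rotate_pow_single,
    u, linearCombination_single, one_smul, hmap]
  obtain _ | ⟨a, w⟩ := w
  · simp [hf0]
  rw [Finset.sum_eq_single (-a).val]
  · simp
  · intro t ht hta
    refine if_neg fun h => hta ?_
    have hat : a + t = 0 := by simpa using h
    rw [neg_eq_of_add_eq_zero_right hat, ZMod.val_cast_of_lt (Finset.mem_range.1 ht)]
  · exact fun h => absurd (Finset.mem_range.2 (ZMod.val_lt _)) h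

/-- A form annihilated by the norm is recovered from its partial sums along each free orbit of
words. -/
lemma exists_comp_sub_one_eq {f : WordChain R (ZMod p) →ₗ[R] M}
    (hf : degenerate R (ZMod p) ≤ LinearMap.ker f)
    (hnorm : ∀ x, f ((∑ t ∈ Finset.range p, rotate p R ^ t) x) = 0) :
    ∃ u : WordChain R (ZMod p) →ₗ[R] M, degenerate R (ZMod p) ≤ LinearMap.ker u ∧
      ∀ x, u ((rotate p R - 1) x) = f x := by
  have hsum (w : List (ZMod p)) :
      ∑ t ∈ Finset.range p, f (single (w.map (· + (t : ZMod p))) 1) = 0 := by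
    simpa [LinearMap.sum_apply, rotate_pow_single] using hnorm (single w 1)
  have hf0 {w : List (ZMod p)} (hw : w = [] ∨ ¬ w.IsChain (· ≠ ·)) : f (single w 1) = 0 :=
    hf (single_mem_degenerate hw 1)
  let u : WordChain R (ZMod p) →ₗ[R] M := linearCombination R fun w =>
    ∑ t ∈ Finset.range w.headI.val, f (single (w.map (· + ((t : ZMod p) - w.headI))) 1)
  refine ⟨u, degenerate_le_iff.2 fun w hw => ?_, fun x => ?_⟩
  · rw [LinearMap.mem_ker, linearCombination_single, one_smul]
    refine Finset.sum_eq_zero fun t _ => hf0 ?_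
    simpa [List.isChain_map] using hw
  suffices u ∘ₗ (rotate p R - 1) = f from LinearMap.congr_fun this x
  ext w : 2
  obtain _ | ⟨a, w⟩ := w
  · simp [rotate, hf0]
  set F : ℕ → M := fun t => f (single ((a :: w).map (· + ((t : ZMod p) - a))) 1) with hF
  have hF0 : ∑ t ∈ Finset.range p, F t = 0 := by
    simpa [hF, Function.comp_def, sub_eq_add_neg, add_assoc, add_comm, add_left_comm]
      using hsum ((a :: w).map (· + -a))
  have hu : u (single (a :: w) 1) = ∑ t ∈ Finset.range a.val, F t := by simp [u, hF]
  have hu1 : u (rotate p R (single (a :: w) 1)) = ∑ t ∈ Finset.range (a + 1).val, F t := by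
    have hshift (t : ZMod p) : 1 + (t - (a + 1)) = t - a := by ring
    simp [u, hF, rotate, Function.comp_def, add_assoc, hshift]
  have hFa : F a.val = f (single (a :: w) 1) := by simp [hF]
  simp [hu, hu1, sum_range_val_add_one hF0, hFa]

lemma exists_comp_periodicDiff_succ_eq {k : ℕ} {f : WordChain R (ZMod p) →ₗ[R] M}
    (hf : degenerate R (ZMod p) ≤ LinearMap.ker f)
    (hk : ∀ x, f (periodicDiff p (rotate p R) k x) = 0) :
    ∃ u : WordChain R (ZMod p) →ₗ[R] M, degenerate R (ZMod p) ≤ LinearMap.ker u ∧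
      ∀ x, u (periodicDiff p (rotate p R) (k + 1) x) = f x := by
  rcases Nat.even_or_odd k with h | h
  · simp only [periodicDiff_of_odd _ h.add_one]
    refine exists_comp_norm_eq hf fun x => sub_eq_zero.1 ?_
    simpa [periodicDiff_of_even _ h] using hk x
  · simp only [periodicDiff_of_even _ h.add_one]
    exact exists_comp_sub_one_eq hf fun x => by simpa [periodicDiff_of_odd _ h] using hk x

end Rotation

section Cochains

variable {p : ℕ} {R : Type*} [CommRing R] {α : Type*}

/-- The augmentation, counting the words of length one. -/
noncomputable def augmentation (R : Type*) [CommRing R] (α : Type*) : WordChain R α →ₗ[R] R :=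
  linearCombination R fun w => if w.length = 1 then 1 else 0

@[simp] lemma augmentation_single (w : List α) :
    augmentation R α (single w 1) = if w.length = 1 then 1 else 0 := by
  simp [augmentation]

lemma augmentation_boundary (x : WordChain R α) : augmentation R α (boundary x) = 0 := by
  suffices augmentation R α ∘ₗ boundary = 0 from LinearMap.congr_fun this x
  ext w : 2
  simp only [LinearMap.comp_apply, lsingle_apply, LinearMap.zero_apply]
  by_cases hw : w.length = 2
  · obtain ⟨a, b, rfl⟩ := List.length_eq_two.1 hw
    simp [boundary_single_cons]
  · refine map_eq_map_of_mem_supported (g := 0) (fun v hv => ?_) (boundary_single_mem_supported w)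
    have hv1 : v.length ≠ 1 := by have := hv.2; omega
    simp [hv1]

lemma degenerate_le_ker_augmentation : degenerate R α ≤ LinearMap.ker (augmentation R α) := by
  refine degenerate_le_iff.2 fun w hw => ?_
  obtain _ | ⟨a, _ | ⟨b, w⟩⟩ := w <;> simp_all

lemma boundary_periodicDiff (k : ℕ) (x : WordChain R (ZMod p)) :
    boundary (periodicDiff p (rotate p R) k x) = periodicDiff p (rotate p R) k (boundary x) :=
  map_periodicDiff (boundary_mapWord _) p k x

/-- The normalized cochains `u` constructed here represent the generators of the cohomology of the
cyclic group. -/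
lemma exists_cochain [NeZero p] (k : ℕ) :
    ∃ u : WordChain R (ZMod p) →ₗ[R] R, degenerate R (ZMod p) ≤ LinearMap.ker u ∧
      (∀ x, u (periodicDiff p (rotate p R) (k + 1) (boundary x)) = 0) ∧
      ∀ c : ℕ → WordChain R (ZMod p),
        (∀ j < k, boundary (c (j + 1)) = periodicDiff p (rotate p R) (j + 1) (c j)) →
        u (periodicDiff p (rotate p R) (k + 1) (c k)) = augmentation R (ZMod p) (c 0) := by
  induction k with
  | zero =>
    have hinv (x) : augmentation R (ZMod p) (periodicDiff p (rotate p R) 0 x) = 0 := by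
      suffices augmentation R (ZMod p) ∘ₗ periodicDiff p (rotate p R) 0 = 0 from
        LinearMap.congr_fun this x
      ext w : 2
      simp [periodicDiff_of_even, rotate]
    obtain ⟨u, hu, hu'⟩ := exists_comp_periodicDiff_succ_eq (p := p) (k := 0)
      (degenerate_le_ker_augmentation (R := R) (α := ZMod p)) hinv
    exact ⟨u, hu, fun x => by rw [hu', augmentation_boundary], fun c _ => hu' (c 0)⟩
  | succ k ih =>
    obtain ⟨u, hu, hu₀, hu₁⟩ := ih
    have hnormalized : degenerate R (ZMod p) ≤ LinearMap.ker (u ∘ₗ boundary) :=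
      fun x hx => LinearMap.mem_ker.2 (hu (boundary_mem_degenerate hx))
    obtain ⟨u', hu', hlift⟩ := exists_comp_periodicDiff_succ_eq (k := k + 1) hnormalized
      fun x => by rw [LinearMap.comp_apply, boundary_periodicDiff, hu₀]
    refine ⟨u', hu', fun x => ?_, fun c hc => ?_⟩
    · rw [hlift, LinearMap.comp_apply, boundary_boundary, map_zero]
    · rw [hlift, LinearMap.comp_apply, hc k k.lt_succ_self, hu₁ c fun j hj => hc j (by omega)]

/-- A chain-level form of the Borsuk–Ulam principle for the cyclic group of order `p`. -/
theorem not_mem_degenerate [NeZero p] [Nontrivial R] {N : ℕ} {c : ℕ → WordChain R (ZMod p)}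
    {a : ZMod p} (h0 : c 0 = single [a] 1)
    (hc : ∀ k < N, boundary (c (k + 1)) = periodicDiff p (rotate p R) (k + 1) (c k)) :
    c N ∉ degenerate R (ZMod p) := by
  intro hN
  obtain ⟨u, hu, -, hu₁⟩ := exists_cochain (p := p) (R := R) N
  have hzero : u (periodicDiff p (rotate p R) (N + 1) (c N)) = 0 :=
    hu (periodicDiff_apply_mem (fun _ => rotate_mem_degenerate) hN)
  simp [hu₁ c hc, h0] at hzero

end Cochains

section Small

variable {X : Type*} [Dist X]

/-- The points of `l` lie in `K` and have mutual distances less than `δ`. -/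
def SmallIn (K : Set X) (δ : ℝ) (l : List X) : Prop :=
  (∀ x ∈ l, x ∈ K) ∧ ∀ x ∈ l, ∀ y ∈ l, dist x y < δ

lemma SmallIn.sublist {K : Set X} {δ : ℝ} {l l' : List X} (hl : SmallIn K δ l)
    (h : l'.Sublist l) : SmallIn K δ l' :=
  ⟨fun x hx => hl.1 x (h.subset hx), fun x hx y hy => hl.2 x (h.subset hx) y (h.subset hy)⟩

end Small

section Barycenter

variable {V W : Type*} [NormedAddCommGroup V] [NormedSpace ℝ V] [AddCommGroup W] [Module ℝ W]

/-- The barycenter of a list of points; it is `0` for the empty list. -/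
noncomputable def barycenter (l : List W) : W := (l.length : ℝ)⁻¹ • l.sum

@[simp] lemma barycenter_singleton (x : W) : barycenter [x] = x := by simp [barycenter]

lemma barycenter_eq_sum (l : List W) :
    barycenter l = ∑ i, (l.length : ℝ)⁻¹ • l.get i := by
  rw [barycenter, ← Finset.smul_sum]
  exact congrArg _ (Fin.sum_univ_getElem l).symm

lemma barycenter_map {W' F : Type*} [AddCommGroup W'] [Module ℝ W'] [FunLike F W W']
    [LinearMapClass F ℝ W W'] (g : F) (l : List W) : barycenter (l.map g) = g (barycenter l) := by
  simp [barycenter, map_list_sum]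

lemma barycenter_mem {S : Set W} (hS : Convex ℝ S) {l : List W} (hl : l ≠ [])
    (h : ∀ x ∈ l, x ∈ S) : barycenter l ∈ S := by
  rw [barycenter_eq_sum]
  refine hS.sum_mem (fun _ _ => by positivity) ?_ fun i _ => h _ (by simp)
  have : (l.length : ℝ) ≠ 0 := by simpa using hl
  simp [this]

lemma dist_barycenter_le {l : List V} {D : ℝ} (hD : ∀ x ∈ l, ∀ y ∈ l, dist x y ≤ D) {v : V}
    (hv : v ∈ l) : dist (barycenter l) v ≤ (1 - (l.length : ℝ)⁻¹) * D := by
  obtain ⟨j, rfl⟩ := List.get_of_mem hv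
  have hl : l ≠ [] := List.ne_nil_of_mem hv
  have hpos : (0 : ℝ) < l.length := by exact_mod_cast List.length_pos_iff.2 hl
  have hsub : barycenter l - l.get j = (l.length : ℝ)⁻¹ • ∑ i, (l.get i - l.get j) := by
    rw [barycenter_eq_sum, ← Finset.smul_sum, Finset.sum_sub_distrib, smul_sub]
    congr 1
    simp [← Nat.cast_smul_eq_nsmul ℝ, hpos.ne']
  rw [dist_eq_norm, hsub, norm_smul, norm_inv, RCLike.norm_natCast]
  calc (l.length : ℝ)⁻¹ * ‖∑ i, (l.get i - l.get j)‖
      ≤ (l.length : ℝ)⁻¹ * ∑ _i ∈ Finset.univ.erase j, D := by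
        rw [← Finset.sum_erase Finset.univ (a := j) (sub_self _)]
        gcongr
        exact norm_sum_le_of_le _ fun i _ => dist_eq_norm (l.get i) (l.get j) ▸
          hD _ (l.get_mem i) _ (l.get_mem j)
    _ = (1 - (l.length : ℝ)⁻¹) * D := by
        rw [Finset.sum_const, Finset.card_erase_of_mem (Finset.mem_univ j), Finset.card_univ,
          Fintype.card_fin, nsmul_eq_mul, Nat.cast_pred (List.length_pos_iff.2 hl)]
        field_simp

lemma dist_barycenter_barycenter_le {a b : List V} {D : ℝ}
    (hD : ∀ x ∈ a, ∀ y ∈ a, dist x y ≤ D) (hba : b.Sublist a) (hb : b ≠ []) :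
    dist (barycenter b) (barycenter a) ≤ (1 - (a.length : ℝ)⁻¹) * D := by
  refine barycenter_mem (convex_closedBall (barycenter a) _) hb fun x hx => ?_
  rw [Metric.mem_closedBall, dist_comm]
  exact dist_barycenter_le hD (hba.subset hx)

/-- `l` consists of the `n` vertices of a simplex of diameter at most `D` contained in `K`. -/
def IsFine (n : ℕ) (D : ℝ) (K : Set V) (l : List V) : Prop :=
  l.length = n ∧ (∀ x ∈ l, ∀ y ∈ l, dist x y ≤ D) ∧ convexHull ℝ {x | x ∈ l} ⊆ K

lemma IsFine.dist_barycenter_le_of_mem_flag {n : ℕ} {D : ℝ} (hD : 0 ≤ D) {K : Set V} {l : List V}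
    (hl : IsFine n D K l) {w : List (List V)} (hw : IsFlag l w) {a b : List V} (ha : a ∈ w)
    (hb : b ∈ w) : dist (barycenter a) (barycenter b) ≤ (1 - (n : ℝ)⁻¹) * D := by
  obtain ⟨rfl, hlD, -⟩ := hl
  obtain ⟨-, hface, hdesc⟩ := hw
  have : Std.Symm fun a b : List V =>
      dist (barycenter a) (barycenter b) ≤ (1 - (l.length : ℝ)⁻¹) * D :=
    ⟨fun a b h => by rwa [dist_comm]⟩
  have hle {a b : List V} (ha : a ∈ w) (hb : b ∈ w) (hba : b.Sublist a) :
      dist (barycenter a) (barycenter b) ≤ (1 - (l.length : ℝ)⁻¹) * D := by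
    obtain ⟨hal, hane⟩ := hface a ha
    have hpos : (0 : ℝ) < a.length := by exact_mod_cast List.length_pos_iff.2 hane
    have hlen : (a.length : ℝ) ≤ l.length := by exact_mod_cast hal.length_le
    calc dist (barycenter a) (barycenter b) ≤ (1 - (a.length : ℝ)⁻¹) * D :=
          dist_comm (barycenter a) _ ▸ dist_barycenter_barycenter_le
            (fun x hx y hy => hlD x (hal.subset hx) y (hal.subset hy)) hba (hface b hb).2
      _ ≤ (1 - (l.length : ℝ)⁻¹) * D := by gcongr
  exact List.Pairwise.forall_of_forall
    (R := fun a b : List V => dist (barycenter a) (barycenter b) ≤ (1 - (l.length : ℝ)⁻¹) * D)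
    (fun a ha => hle ha ha (.refl a)) (hdesc.imp_of_mem hle) ha hb

lemma IsFine.map_barycenter {n : ℕ} {D : ℝ} (hD : 0 ≤ D) {K : Set V} {l : List V}
    (hl : IsFine n D K l) {w : List (List V)} (hw : IsFlag l w) :
    IsFine n ((1 - (n : ℝ)⁻¹) * D) K (w.map barycenter) := by
  refine ⟨by rw [List.length_map, hw.1, hl.1], ?_, (convexHull_min ?_ (convex_convexHull ℝ _)).trans
    hl.2.2⟩
  · simp only [List.forall_mem_map]
    exact fun a ha b hb => hl.dist_barycenter_le_of_mem_flag hD hw ha hb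
  · intro x hx
    obtain ⟨a, ha, rfl⟩ := List.mem_map.1 hx
    exact barycenter_mem (convex_convexHull ℝ _) (hw.2.1 a ha).2 fun y hy =>
      subset_convexHull ℝ _ ((hw.2.1 a ha).1.subset hy)

lemma IsFine.smallIn {n : ℕ} {D δ : ℝ} {K : Set V} {l : List V} (hl : IsFine n D K l)
    (h : D < δ) : SmallIn K δ l :=
  ⟨fun _ hx => hl.2.2 (subset_convexHull ℝ _ hx), fun x hx y hy => (hl.2.1 x hx y hy).trans_lt h⟩

end Barycenter

section GeometricSubdivision

variable {R : Type*} [CommRing R] {V W : Type*} [NormedAddCommGroup V] [NormedSpace ℝ V]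
  [AddCommGroup W] [Module ℝ W]

/-- The barycentric subdivision of chains of affine simplices, given by their lists of vertices. -/
noncomputable def subdivideGeom : Module.End R (WordChain R W) := mapWord barycenter ∘ₗ subdivide

lemma boundary_subdivideGeom_pow (m : ℕ) (x : WordChain R W) :
    boundary ((subdivideGeom ^ m : Module.End R (WordChain R W)) x) =
      (subdivideGeom ^ m : Module.End R (WordChain R W)) (boundary x) :=
  map_pow_apply_of_mem (S := ⊤) (by simp)
    (fun x _ => by simp [subdivideGeom, boundary_mapWord, boundary_subdivide]) m trivial

lemma subdivideGeom_pow_mapWord {F : Type*} [FunLike F W W] [LinearMapClass F ℝ W W] (g : F)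
    (m : ℕ) (x : WordChain R W) :
    (subdivideGeom ^ m : Module.End R (WordChain R W)) (mapWord g x) =
      mapWord g ((subdivideGeom ^ m : Module.End R (WordChain R W)) x) := by
  refine (map_pow_apply_of_mem (M := WordChain R W) (f := mapWord g) (S := ⊤) (by simp)
    (fun x _ => ?_) m trivial).symm
  simp [subdivideGeom, subdivide_mapWord, mapWord_mapWord, Function.comp_def, barycenter_map]

lemma subdivideGeom_pow_single_singleton (m : ℕ) (x : W) :
    (subdivideGeom ^ m : Module.End R (WordChain R W)) (single [x] 1) = single [x] 1 := by
  induction m with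
  | zero => simp
  | succ m ih =>
    rw [pow_succ', Module.End.mul_apply, ih]
    simp [subdivideGeom, subdivide_single_cons, boundary_single_cons]

lemma subdivideGeom_mem_supported {n : ℕ} {D : ℝ} (hD : 0 ≤ D) {K : Set V} {x : WordChain R V}
    (hx : x ∈ supported R R {l | IsFine n D K l}) :
    subdivideGeom x ∈ supported R R {l | IsFine n ((1 - (n : ℝ)⁻¹) * D) K l} := by
  refine map_mem_of_mem_supported (fun l hl => ?_) hx
  exact mapWord_mem_supported (fun w hw => IsFine.map_barycenter hD hl hw)
    (subdivide_single_mem_supported l)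

lemma subdivideGeom_pow_mem_supported {n : ℕ} {D : ℝ} (hD : 0 ≤ D) {K : Set V} {x : WordChain R V}
    (hx : x ∈ supported R R {l | IsFine (n + 1) D K l}) (m : ℕ) :
    (subdivideGeom ^ m : Module.End R (WordChain R V)) x ∈
      supported R R {l | IsFine (n + 1) ((1 - ((n + 1 : ℕ) : ℝ)⁻¹) ^ m * D) K l} := by
  have hq : 0 ≤ 1 - ((n + 1 : ℕ) : ℝ)⁻¹ := sub_nonneg.2 (Nat.cast_inv_le_one _)
  induction m with
  | zero => simpa using hx
  | succ m ih =>
    rw [pow_succ' subdivideGeom, pow_succ' (1 - _), mul_assoc, Module.End.mul_apply]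
    exact subdivideGeom_mem_supported (by positivity) ih

lemma eventually_subdivideGeom_pow_mem_supported {n : ℕ} {D : ℝ} (hD : 0 ≤ D) {K : Set V}
    {x : WordChain R V} (hx : x ∈ supported R R {l | IsFine (n + 1) D K l}) {δ : ℝ} (hδ : 0 < δ) :
    ∀ᶠ m in Filter.atTop, (subdivideGeom ^ m : Module.End R (WordChain R V)) x ∈
      supported R R {l | l.length = n + 1 ∧ SmallIn K δ l} := by
  have hq : 0 ≤ 1 - ((n + 1 : ℕ) : ℝ)⁻¹ := sub_nonneg.2 (Nat.cast_inv_le_one _)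
  have hq1 : 1 - ((n + 1 : ℕ) : ℝ)⁻¹ < 1 := sub_lt_self _ (by positivity)
  have hlim := (tendsto_pow_atTop_nhds_zero_of_lt_one hq hq1).mul_const D
  rw [zero_mul] at hlim
  filter_upwards [hlim.eventually_lt_const hδ] with m hm
  refine supported_mono (fun l hl => ?_) (subdivideGeom_pow_mem_supported hD hx m)
  exact ⟨hl.1, hl.smallIn hm⟩

end GeometricSubdivision

section Join

variable {R : Type*} [CommRing R] {α : Type*} {p : ℕ}

lemma mapWord_pow (g : α → α) (t : ℕ) :
    (mapWord g : Module.End R (WordChain R α)) ^ t = mapWord g^[t] := by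
  induction t with
  | zero =>
    ext l : 2
    simp
  | succ t ih =>
    ext l : 2
    simp [pow_succ, ih]

/-- The `k`-th chain of the standard resolution in the iterated join of the orbits of
`v 0, v 1, …`. -/
noncomputable def joinChain (R : Type*) [CommRing R] (p : ℕ) (g : α → α) (v : ℕ → α) :
    ℕ → WordChain R α
  | 0 => single [v 0] 1
  | k + 1 => cone (v (k + 1)) (periodicDiff p (mapWord g) (k + 1) (joinChain R p g v k))

lemma boundary_joinChain [CharP R p] {g : α → α} (hg : g^[p] = id) (v : ℕ → α) (k : ℕ) :
    boundary (joinChain R p g v (k + 1)) =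
      periodicDiff p (mapWord g) (k + 1) (joinChain R p g v k) := by
  rw [joinChain, boundary_cone, sub_eq_self]
  suffices h : boundary (periodicDiff p (mapWord g) (k + 1) (joinChain R p g v k)) = 0 by
    rw [h, map_zero]
  rw [map_periodicDiff (boundary_mapWord g)]
  induction k with
  | zero =>
    simp [joinChain, boundary_single_cons, periodicDiff_of_odd, LinearMap.sum_apply, mapWord_pow]
  | succ k ih =>
    have hT : (mapWord g : Module.End R (WordChain R α)) ^ p = 1 := by
      rw [mapWord_pow, hg]
      ext l : 2
      simp
    rw [joinChain, boundary_cone, map_periodicDiff (boundary_mapWord g), ih, map_zero, sub_zero,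
      ← Module.End.mul_apply, periodicDiff_succ_mul hT, LinearMap.zero_apply]

lemma joinChain_mem_supported (g : α → α) (v : ℕ → α) (k : ℕ) :
    joinChain R p g v k ∈ supported R R {w | w.length = k + 1 ∧
      ∃ a : ℕ → ℕ, ∀ x ∈ w, x ∈ (fun j => g^[a j] (v j)) '' Set.Iic k} := by
  induction k with
  | zero =>
    refine single_mem_supported R 1 ?_
    exact ⟨rfl, fun _ => 0, by simp⟩
  | succ k ih =>
    refine cone_mem_supported (fun w hw => ?_) (periodicDiff_apply_mem (fun x hx => ?_) ih)
    · obtain ⟨hlen, a, ha⟩ := hw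
      refine ⟨by simp [hlen], fun j => if j ≤ k then a j else 0,
        List.forall_mem_cons.2 ⟨⟨k + 1, Set.self_mem_Iic, by simp⟩, fun x hx => ?_⟩⟩
      obtain ⟨j, hj, rfl⟩ := ha x hx
      exact ⟨j, Set.Iic_subset_Iic.2 k.le_succ hj, by simp [Set.mem_Iic.1 hj]⟩
    · refine mapWord_mem_supported (fun w hw => ?_) hx
      obtain ⟨hlen, a, ha⟩ := hw
      refine ⟨by simpa using hlen, fun j => a j + 1, List.forall_mem_map.2 fun x hx => ?_⟩
      obtain ⟨j, hj, rfl⟩ := ha x hx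
      exact ⟨j, hj, Function.iterate_succ_apply' g (a j) (v j)⟩

end Join

section OrbitJoin

variable {V : Type*} [NormedAddCommGroup V] [NormedSpace ℝ V] {p : ℕ}

/-- The union of the simplices spanned by one point from the orbit of each of `v 0, …, v N`. -/
def orbitJoin {V : Type*} [AddCommGroup V] [Module ℝ V] (g : V → V) (v : ℕ → V) (N : ℕ) : Set V :=
  ⋃ a : ℕ → ℕ, convexHull ℝ ((fun j => g^[a j] (v j)) '' Set.Iic N)

lemma isCompact_orbitJoin {g : V → V} (hp : 0 < p) (hg : g^[p] = id) (v : ℕ → V) (N : ℕ) :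
    IsCompact (orbitJoin g v N) := by
  let vertices : Set V := Set.image2 (fun j t => g^[t] (v j)) (Set.Iic N) (Set.Iio p)
  have hvertices : vertices.Finite := (Set.finite_Iic N).image2 _ (Set.finite_Iio p)
  have hsub (a : ℕ → ℕ) : (fun j => g^[a j] (v j)) '' Set.Iic N ⊆ vertices := by
    rintro _ ⟨j, hj, rfl⟩
    have hper : Function.IsPeriodicPt g p (v j) := congrFun hg (v j)
    exact ⟨j, hj, a j % p, Nat.mod_lt _ hp, hper.iterate_mod_apply (a j)⟩
  rw [orbitJoin, ← Set.biUnion_range (f := fun a : ℕ → ℕ => (fun j => g^[a j] (v j)) '' Set.Iic N)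
    (g := fun s => convexHull ℝ s)]
  refine (hvertices.finite_subsets.subset ?_).isCompact_biUnion ?_
  · exact Set.range_subset_iff.2 hsub
  · rintro _ ⟨a, rfl⟩
    exact (hvertices.subset (hsub a)).isCompact_convexHull ℝ

lemma map_mem_orbitJoin (g : V →ₗᵢ[ℝ] V) (v : ℕ → V) (N : ℕ) {x : V} (hx : x ∈ orbitJoin g v N) :
    g x ∈ orbitJoin g v N := by
  obtain ⟨a, ha⟩ := Set.mem_iUnion.1 hx
  refine Set.mem_iUnion.2 ⟨fun j => a j + 1, ?_⟩
  have himage := Set.mem_image_of_mem g.toLinearMap ha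
  rw [LinearMap.image_convexHull, Set.image_image] at himage
  simpa only [Function.iterate_succ_apply', LinearIsometry.coe_toLinearMap] using himage

lemma SmallIn.map {g : V →ₗᵢ[ℝ] V} {v : ℕ → V} {N : ℕ} {δ : ℝ} {l : List V}
    (hl : SmallIn (orbitJoin g v N) δ l) : SmallIn (orbitJoin g v N) δ (l.map g) := by
  simp only [SmallIn, List.forall_mem_map, g.dist_map]
  exact ⟨fun x hx => map_mem_orbitJoin g v N (hl.1 x hx), hl.2⟩

lemma exists_joinChain_mem_supported_isFine (R : Type*) [CommRing R] {g : V → V} (hp : 0 < p)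
    (hg : g^[p] = id) (v : ℕ → V) (N : ℕ) : ∃ D, 0 ≤ D ∧ ∀ k ≤ N,
      joinChain R p g v k ∈ supported R R {l | IsFine (k + 1) D (orbitJoin g v N) l} := by
  refine ⟨Metric.diam (orbitJoin g v N), Metric.diam_nonneg, fun k hk =>
    supported_mono ?_ (joinChain_mem_supported g v k)⟩
  rintro l ⟨hlen, a, ha⟩
  have hsub : convexHull ℝ {x | x ∈ l} ⊆ orbitJoin g v N :=
    (convexHull_mono fun x hx => Set.image_mono (Set.Iic_subset_Iic.2 hk) (ha x hx)).trans
      (Set.subset_iUnion_of_subset a subset_rfl)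
  have hmem {x : V} (hx : x ∈ l) : x ∈ orbitJoin g v N := hsub (subset_convexHull ℝ _ hx)
  exact ⟨hlen, fun x hx y hy => Metric.dist_le_diam_of_mem
    (isCompact_orbitJoin hp hg v N).isBounded (hmem hx) (hmem hy), hsub⟩

lemma exists_subdivideGeom_pow_joinChain_mem_supported (R : Type*) [CommRing R] {g : V → V}
    (hp : 0 < p) (hg : g^[p] = id) (v : ℕ → V) (N : ℕ) {δ : ℝ} (hδ : 0 < δ) : ∃ m, ∀ k ≤ N,
      (subdivideGeom ^ m : Module.End R (WordChain R V)) (joinChain R p g v k) ∈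
        supported R R {l | l.length = k + 1 ∧ SmallIn (orbitJoin g v N) δ l} := by
  obtain ⟨D, hD, hfine⟩ := exists_joinChain_mem_supported_isFine R hp hg v N
  exact ((Set.finite_Iic N).eventually_all.2 fun k hk =>
    eventually_subdivideGeom_pow_mem_supported hD (hfine k hk) hδ).exists

variable {R : Type*} [CommRing R] {g : V →ₗᵢ[ℝ] V} {v : ℕ → V} {N : ℕ} {δ : ℝ} {s : List V → ZMod p}

lemma mapWord_subdivide_mapWord
    (hs : ∀ l ≠ [], SmallIn (orbitJoin g v N) δ l → s (l.map g) = s l + 1) {x : WordChain R V}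
    (hx : x ∈ supported R R {l | SmallIn (orbitJoin g v N) δ l}) :
    mapWord s (subdivide (mapWord g x)) = rotate p R (mapWord s (subdivide x)) := by
  refine map_eq_map_of_mem_supported (f := mapWord s ∘ₗ subdivide ∘ₗ mapWord g)
    (g := rotate p R ∘ₗ mapWord s ∘ₗ subdivide) (fun l hl => ?_) hx
  simp only [LinearMap.comp_apply, subdivide_mapWord]
  refine map_eq_map_of_mem_supported (f := mapWord s ∘ₗ mapWord (List.map g))
    (g := rotate p R ∘ₗ mapWord s) (fun w hw => ?_) (subdivide_single_mem_supported l)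
  simp only [LinearMap.comp_apply, mapWord_single, rotate, List.map_map]
  congr 1
  exact List.map_congr_left fun a ha => hs a (hw.2.1 a ha).2 (hl.sublist (hw.2.1 a ha).1)

lemma boundary_mapWord_subdivide_joinChain [CharP R p] (hg : g^[p] = id)
    (hs : ∀ l ≠ [], SmallIn (orbitJoin g v N) δ l → s (l.map g) = s l + 1) {k m : ℕ}
    (hm : (subdivideGeom ^ m : Module.End R (WordChain R V)) (joinChain R p g v k) ∈
      supported R R {l | SmallIn (orbitJoin g v N) δ l}) :
    boundary (mapWord s (subdivide ((subdivideGeom ^ m : Module.End R (WordChain R V))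
        (joinChain R p g v (k + 1))))) =
      periodicDiff p (rotate p R) (k + 1) (mapWord s (subdivide
        ((subdivideGeom ^ m : Module.End R (WordChain R V)) (joinChain R p g v k)))) := by
  rw [boundary_mapWord, boundary_subdivide, boundary_subdivideGeom_pow, boundary_joinChain hg,
    map_periodicDiff (subdivideGeom_pow_mapWord g m)]
  have hinv (x : WordChain R V) (hx : x ∈ supported R R {l | SmallIn (orbitJoin g v N) δ l}) :
      mapWord g x ∈ supported R R {l | SmallIn (orbitJoin g v N) δ l} :=
    mapWord_mem_supported (fun l hl => SmallIn.map hl) hx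
  exact map_periodicDiff_of_mem (f := mapWord s ∘ₗ subdivide) hinv
    (fun x hx => mapWord_subdivide_mapWord hs hx) p (k + 1) hm

/-- A **Borsuk–Ulam–Dold type theorem** for a linear isometric action of a cyclic group. -/
theorem exists_isFlag_isChain_ne [NeZero p] [Fact (1 < p)] (hg : g^[p] = id) (hδ : 0 < δ)
    (hs : ∀ l ≠ [], SmallIn (orbitJoin g v N) δ l → s (l.map g) = s l + 1) :
    ∃ l w, l.length = N + 1 ∧ SmallIn (orbitJoin g v N) δ l ∧ IsFlag l w ∧
      (w.map s).IsChain (· ≠ ·) := by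
  obtain ⟨m, hm⟩ := exists_subdivideGeom_pow_joinChain_mem_supported (ZMod p)
    (NeZero.pos p) hg v N hδ
  let c (k : ℕ) : WordChain (ZMod p) (ZMod p) :=
    mapWord s (subdivide ((subdivideGeom ^ m : Module.End _ _) (joinChain (ZMod p) p g v k)))
  have hzero : c 0 = single [s [v 0]] 1 := by
    simp [c, joinChain, subdivideGeom_pow_single_singleton, subdivide_single_cons,
      boundary_single_cons]
  by_contra! hcon
  refine not_mem_degenerate hzero (fun k hk => boundary_mapWord_subdivide_joinChain hg hs
    (supported_mono (fun l hl => hl.2) (hm k hk.le))) ?_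
  refine map_mem_of_mem_supported (f := mapWord s ∘ₗ subdivide) (fun l hl => ?_) (hm N le_rfl)
  exact mapWord_mem_supported (fun w hw => .inr (hcon l w hl.1 hl.2 hw))
    (subdivide_single_mem_supported l)

end OrbitJoin

end WordChain

section FreeAction

lemma exists_equivariant_of_free (G α : Type*) [AddGroup G] [AddAction G α] :
    ∃ σ : α → G, ∀ a, (∀ t : G, t +ᵥ a = a → t = 0) → ∀ t : G, σ (t +ᵥ a) = t + σ a := by
  let rep (a : α) : α := (Quotient.mk (AddAction.orbitRel G α) a).out
  have hrep (a : α) : ∃ t : G, t +ᵥ rep a = a :=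
    Setoid.symm' _ (Quotient.mk_out (s := AddAction.orbitRel G α) a)
  choose σ hσ using hrep
  refine ⟨σ, fun a ha t => ?_⟩
  have hrep_vadd : rep (t +ᵥ a) = rep a :=
    congrArg Quotient.out (Quotient.sound (s := AddAction.orbitRel G α) ⟨t, rfl⟩)
  have horbit : σ (t +ᵥ a) +ᵥ rep a = t +ᵥ a := hrep_vadd ▸ hσ (t +ᵥ a)
  have hfix : (-t + σ (t +ᵥ a) + -σ a) +ᵥ a = a := by
    rw [add_vadd, neg_vadd_eq_iff.2 (hσ a).symm, add_vadd, horbit, neg_vadd_vadd]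
  exact neg_add_eq_iff_eq_add.1 (add_neg_eq_zero.1 (ha _ hfix))

variable {p : ℕ} [Fact p.Prime]

lemma eq_top_of_mem_of_ne_zero {H : AddSubgroup (ZMod p)} {t : ZMod p} (ht : t ∈ H)
    (ht0 : t ≠ 0) : H = ⊤ := by
  have : Fact (Nat.card (ZMod p)).Prime := ⟨by rw [Nat.card_zmod]; exact Fact.out⟩
  exact H.eq_bot_or_eq_top_of_prime_card.resolve_left fun h => ht0 (by simpa [h] using ht)

lemma eq_zero_of_vadd_eq_self {α : Type*} [AddAction (ZMod p) α] {a : α}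
    (ha : ∃ s : ZMod p, s +ᵥ a ≠ a) {t : ZMod p} (ht : t +ᵥ a = a) : t = 0 := by
  by_contra ht0
  obtain ⟨s, hs⟩ := ha
  have hstab := eq_top_of_mem_of_ne_zero (H := AddAction.stabilizer (ZMod p) a) ht ht0
  exact hs (AddAction.mem_stabilizer_iff.1 (hstab ▸ AddSubgroup.mem_top s))

lemma preconnected_of_reachable_vadd {G : SimpleGraph (ZMod p)}
    (hG : ∀ s i j : ZMod p, G.Reachable i j → G.Reachable (s + i) (s + j)) {i j : ZMod p}
    (hij : i ≠ j) (h : G.Reachable i j) : G.Preconnected := by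
  let H : AddSubgroup (ZMod p) :=
    { carrier := {t | ∀ a, G.Reachable a (a + t)}
      zero_mem' := fun a => by rw [add_zero]
      add_mem' := fun hs ht a => add_assoc a _ _ ▸ (hs a).trans (ht _)
      neg_mem' := fun {t} ht a => by simpa using (ht (a + -t)).symm }
  have hmem : j - i ∈ H := fun a => by
    simpa [sub_add_eq_add_sub, add_sub_assoc] using hG (a - i) i j h
  have htop := eq_top_of_mem_of_ne_zero hmem (sub_ne_zero.2 hij.symm)
  intro a b
  have hb : b - a ∈ H := htop ▸ AddSubgroup.mem_top _
  simpa using hb a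

end FreeAction

section RankedLabel

open WordChain

variable {V : Type*} [NormedAddCommGroup V] [NormedSpace ℝ V] {p : ℕ} [NeZero p]
  [Fact (1 < p)] {g : V →ₗᵢ[ℝ] V} {v : ℕ → V} {N : ℕ} {δ : ℝ}

theorem exists_smallIn_lt_rank (hg : g^[p] = id) (hδ : 0 < δ) {α : Type*} [AddAction (ZMod p) α]
    {q : List V → α} (hq : ∀ l, q (l.map g) = (1 : ZMod p) +ᵥ q l)
    (hfree : ∀ l ≠ [], SmallIn (orbitJoin g v N) δ l → ∀ t : ZMod p, t +ᵥ q l = q l → t = 0)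
    {rk : List V → ℕ} (hpos : ∀ l ≠ [], SmallIn (orbitJoin g v N) δ l → 0 < rk l)
    (hmono : ∀ ⦃l' l⦄, l'.Sublist l → q l' ≠ q l → rk l' < rk l) :
    ∃ l ≠ [], SmallIn (orbitJoin g v N) δ l ∧ N < rk l := by
  obtain ⟨σ, hσ⟩ := exists_equivariant_of_free (ZMod p) α
  obtain ⟨l, w, hlen, hl, ⟨hwlen, hface, hdesc⟩, hchain⟩ :=
    exists_isFlag_isChain_ne (s := fun l => σ (q l)) (v := v) (N := N) hg hδ fun l hne hl => by
      rw [hq, hσ _ (hfree l hne hl), add_comm]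
  have hdec : (w.map rk).IsChain (· > ·) := by
    rw [List.isChain_map] at hchain ⊢
    rw [List.isChain_iff_getElem] at hchain ⊢
    exact fun i hi => hmono (List.isChain_iff_getElem.1 hdesc.isChain i hi) fun heq =>
      hchain i hi (congrArg σ heq).symm
  by_contra! hle
  have hsub : (w.map rk).toFinset ⊆ Finset.Ioc 0 N := by
    intro n hn
    obtain ⟨a, ha, rfl⟩ := List.mem_map.1 (List.mem_toFinset.1 hn)
    obtain ⟨hal, hane⟩ := hface a ha
    exact Finset.mem_Ioc.2 ⟨hpos a hane (hl.sublist hal), hle a hane (hl.sublist hal)⟩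
  have hcard := Finset.card_le_card hsub
  rw [List.toFinset_card_of_nodup hdec.pairwise.nodup, List.length_map, hwlen, hlen,
    Nat.card_Ioc] at hcard
  omega

end RankedLabel

section Components

variable {W : Type*} [Finite W] {G H : SimpleGraph W}

lemma card_connectedComponent_anti (h : G ≤ H) :
    Nat.card H.ConnectedComponent ≤ Nat.card G.ConnectedComponent :=
  Nat.card_le_card_of_surjective _ (SimpleGraph.ConnectedComponent.surjective_map_ofLE h)

lemma reachable_of_card_connectedComponent_le (h : G ≤ H)
    (hcard : Nat.card G.ConnectedComponent ≤ Nat.card H.ConnectedComponent) {i j : W}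
    (hij : H.Reachable i j) : G.Reachable i j := by
  have hbij := (Nat.bijective_iff_surjective_and_card _).2
    ⟨SimpleGraph.ConnectedComponent.surjective_map_ofLE h,
      hcard.antisymm (card_connectedComponent_anti h)⟩
  exact SimpleGraph.ConnectedComponent.exact (hbij.1 (by simpa using hij))

lemma card_connectedComponent_lt {i j : W} (hij : i ≠ j) (h : G.Reachable i j) :
    Nat.card G.ConnectedComponent < Nat.card W := by
  have hsurj : Function.Surjective G.connectedComponentMk := Quot.mk_surjective
  refine (Nat.card_le_card_of_surjective _ hsurj).lt_of_ne fun hcard => hij ?_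
  exact ((Nat.bijective_iff_surjective_and_card _).2 ⟨hsurj, hcard.symm⟩).1
    (SimpleGraph.ConnectedComponent.sound h)

lemma one_lt_card_connectedComponent {i j : W} (h : ¬ G.Reachable i j) :
    1 < Nat.card G.ConnectedComponent :=
  Finite.one_lt_card_iff_nontrivial.2 ⟨G.connectedComponentMk i, G.connectedComponentMk j,
    fun he => h (SimpleGraph.ConnectedComponent.exact he)⟩

lemma dist_le_card_mul_of_reachable {E : Type*} [PseudoMetricSpace E] {x : W → E} {c : ℝ}
    (hc : 0 ≤ c) (hG : ∀ i j, G.Adj i j → dist (x i) (x j) ≤ c) {i j : W} (h : G.Reachable i j) :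
    dist (x i) (x j) ≤ Nat.card W * c := by
  classical
  have := Fintype.ofFinite W
  have hwalk {i j : W} (q : G.Walk i j) : dist (x i) (x j) ≤ q.length * c := by
    induction q with
    | nil => simp
    | @cons u w z hadj q ih =>
      rw [SimpleGraph.Walk.length_cons, Nat.cast_succ]
      linarith [dist_triangle (x u) (x w) (x z), hG _ _ hadj]
  obtain ⟨q⟩ := h
  refine (hwalk q.toPath.1).trans (mul_le_mul_of_nonneg_right ?_ hc)
  exact_mod_cast Nat.card_eq_fintype_card (α := W) ▸ q.toPath.2.length_lt.le

end Components

section TupleLabel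

variable {W ι E : Type*} [PseudoMetricSpace E] {Φ : (W → E) → ι → W → ℝ} {ε ε' : ℝ}
  {l l' : List (W → E)}

/-- The graph joining two indices if the corresponding two entries of some tuple in `l` have
distance less than `ε`. -/
def nearGraph (ε : ℝ) (l : List (W → E)) : SimpleGraph W :=
  SimpleGraph.fromRel fun i j => ∃ x ∈ l, dist (x i) (x j) < ε

lemma nearGraph_adj {i j : W} :
    (nearGraph ε l).Adj i j ↔ i ≠ j ∧ ∃ x ∈ l, dist (x i) (x j) < ε := by
  simp [nearGraph, dist_comm]

lemma nearGraph_mono (h : l' ⊆ l) : nearGraph ε l' ≤ nearGraph ε l := by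
  intro i j
  rw [nearGraph_adj, nearGraph_adj]
  exact fun ⟨hij, x, hx, hdist⟩ => ⟨hij, x, h hx, hdist⟩

/-- The indices at which the `i`-th test function `Φ · i` is at least `ε'` on some tuple in `l`. -/
def largeSet (Φ : (W → E) → ι → W → ℝ) (ε' : ℝ) (l : List (W → E)) (i : ι) : Set W :=
  {k | ∃ x ∈ l, ε' ≤ Φ x i k}

omit [PseudoMetricSpace E] in
lemma largeSet_mono (h : l' ⊆ l) (i : ι) : largeSet Φ ε' l' i ⊆ largeSet Φ ε' l i :=
  fun _ ⟨x, hx, hlarge⟩ => ⟨x, h hx, hlarge⟩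

/-- The combinatorial data attached to a small simplex of tuples: where each test function is large,
and which entries are linked by chains of near pairs. -/
def tupleLabel (Φ : (W → E) → ι → W → ℝ) (ε ε' : ℝ) (l : List (W → E)) :
    (ι → Set W) × Set (W × W) :=
  (largeSet Φ ε' l, {e | (nearGraph ε l).Reachable e.1 e.2})

/-- A rank which strictly increases with the label `tupleLabel`. -/
noncomputable def tupleRank [Fintype ι] (Φ : (W → E) → ι → W → ℝ) (ε ε' : ℝ)
    (l : List (W → E)) : ℕ :=
  ∑ i, (largeSet Φ ε' l i).ncard + (Nat.card W - Nat.card (nearGraph ε l).ConnectedComponent)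

lemma tupleRank_lt [Finite W] [Fintype ι] (h : l' ⊆ l)
    (hne : tupleLabel Φ ε ε' l' ≠ tupleLabel Φ ε ε' l) :
    tupleRank Φ ε ε' l' < tupleRank Φ ε ε' l := by
  contrapose! hne
  have hncard (i : ι) (_ : i ∈ Finset.univ) :
      (largeSet Φ ε' l' i).ncard ≤ (largeSet Φ ε' l i).ncard :=
    Set.ncard_le_ncard (largeSet_mono h i)
  have hsum := Finset.sum_le_sum hncard
  have hcomp := card_connectedComponent_anti (nearGraph_mono (ε := ε) h)
  have hcompW : Nat.card (nearGraph ε l').ConnectedComponent ≤ Nat.card W :=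
    Nat.card_le_card_of_surjective _ Quot.mk_surjective
  unfold tupleRank at hne
  have hncard_eq := (Finset.sum_eq_sum_iff_of_le hncard).1 (by omega)
  refine Prod.ext (funext fun i => ?_) (Set.ext fun e => ⟨?_, ?_⟩)
  · exact Set.eq_of_subset_of_ncard_le (largeSet_mono h i) (hncard_eq i (Finset.mem_univ i)).ge
  · exact fun he => SimpleGraph.Reachable.mono (nearGraph_mono h) he
  · exact reachable_of_card_connectedComponent_le (nearGraph_mono h) (by omega)

/-- The label of `l` is neither empty nor full: no test function is large at all indices, the near
graph is disconnected, and something is large or near. -/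
structure IsAdmissible (Φ : (W → E) → ι → W → ℝ) (ε ε' : ℝ) (l : List (W → E)) : Prop where
  exists_notMem_largeSet : ∀ i, ∃ k, k ∉ largeSet Φ ε' l i
  exists_not_reachable : ∃ i j, ¬ (nearGraph ε l).Reachable i j
  nonempty_or_reachable : (∃ i, (largeSet Φ ε' l i).Nonempty) ∨
    ∃ i j, i ≠ j ∧ (nearGraph ε l).Reachable i j

lemma IsAdmissible.tupleRank_pos [Finite W] [Fintype ι] (h : IsAdmissible Φ ε ε' l) :
    0 < tupleRank Φ ε ε' l := by
  obtain ⟨i, hi⟩ | ⟨i, j, hij, hreach⟩ := h.nonempty_or_reachable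
  · exact Nat.add_pos_left (Finset.sum_pos' (fun _ _ => Nat.zero_le _)
      ⟨i, Finset.mem_univ i, (Set.ncard_pos).2 hi⟩) _
  · exact Nat.add_pos_right _ (Nat.sub_pos_of_lt (card_connectedComponent_lt hij hreach))

lemma IsAdmissible.tupleRank_le [Finite W] [Fintype ι] (h : IsAdmissible Φ ε ε' l) :
    tupleRank Φ ε ε' l ≤ Fintype.card ι * (Nat.card W - 1) + (Nat.card W - 2) := by
  obtain ⟨i, j, hij⟩ := h.exists_not_reachable
  have hncard (i : ι) : (largeSet Φ ε' l i).ncard ≤ Nat.card W - 1 := by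
    obtain ⟨k, hk⟩ := h.exists_notMem_largeSet i
    exact Nat.le_sub_one_of_lt
      (Set.ncard_univ W ▸ Set.ncard_lt_ncard (Set.ssubset_univ_iff.2 fun h => by simp [h] at hk))
  refine add_le_add ?_ (Nat.sub_le_sub_left (one_lt_card_connectedComponent hij) _)
  simpa using Finset.sum_le_sum fun i (_ : i ∈ Finset.univ) => hncard i

end TupleLabel

section CyclicLabel

open Pointwise

variable {p : ℕ} {ι E : Type*} [PseudoMetricSpace E] {Φ : (ZMod p → E) → ι → ZMod p → ℝ} {ε ε' : ℝ}

lemma tupleLabel_map_of_apply_sub_one {g : (ZMod p → E) → ZMod p → E}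
    (hg : ∀ x k, g x k = x (k - 1)) (hΦ : ∀ x i k, Φ (g x) i k = Φ x i (k - 1))
    (l : List (ZMod p → E)) :
    tupleLabel Φ ε ε' (l.map g) = (1 : ZMod p) +ᵥ tupleLabel Φ ε ε' l := by
  refine Prod.ext (funext fun i => Set.ext fun k => ?_) (Set.ext fun e => ?_)
  · simp [tupleLabel, largeSet, Set.mem_vadd_set_iff_neg_vadd_mem, hΦ, sub_eq_neg_add]
  · let φ : nearGraph ε (l.map g) ≃g nearGraph ε l :=
      { toEquiv := Equiv.subRight 1
        map_rel_iff' := by simp [nearGraph_adj, hg] }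
    simpa [tupleLabel, Set.mem_vadd_set_iff_neg_vadd_mem, φ, sub_eq_neg_add] using
      (φ.reachable_iff (u := e.1) (v := e.2)).symm

lemma IsAdmissible.eq_zero_of_vadd_tupleLabel [Fact p.Prime] {l : List (ZMod p → E)}
    (h : IsAdmissible Φ ε ε' l) {t : ZMod p}
    (ht : t +ᵥ tupleLabel Φ ε ε' l = tupleLabel Φ ε ε' l) : t = 0 := by
  refine eq_zero_of_vadd_eq_self ?_ ht
  by_contra! hfix
  obtain ⟨i, a, ha⟩ | ⟨i, j, hij, hreach⟩ := h.nonempty_or_reachable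
  · obtain ⟨b, hb⟩ := h.exists_notMem_largeSet i
    have hlarge : (b - a) +ᵥ largeSet Φ ε' l i = largeSet Φ ε' l i :=
      congrFun (congrArg Prod.fst (hfix (b - a))) i
    have hmem := Set.vadd_mem_vadd_set (a := b - a) ha
    rw [hlarge, vadd_eq_add, sub_add_cancel] at hmem
    exact hb hmem
  · obtain ⟨a, b, hab⟩ := h.exists_not_reachable
    refine hab (preconnected_of_reachable_vadd (fun s i j hreach => ?_) hij hreach a b)
    have hmem : s +ᵥ (i, j) ∈ s +ᵥ (tupleLabel Φ ε ε' l).2 := Set.vadd_mem_vadd_set hreach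
    rwa [show s +ᵥ (tupleLabel Φ ε ε' l).2 = (tupleLabel Φ ε ε' l).2 from
      congrArg Prod.snd (hfix s)] at hmem

end CyclicLabel

section Compactness

lemma exists_pos_forall_exists_le_of_isCompact {X ι : Type*} [TopologicalSpace X] [Finite ι]
    {K : Set X} (hK : IsCompact K) {F : X → ι → ℝ} (hF : Continuous F)
    (hpos : ∀ x ∈ K, ∃ i, 0 < F x i) : ∃ ε > 0, ∀ x ∈ K, ∃ i, ε ≤ F x i := by
  have := Fintype.ofFinite ι
  cases isEmpty_or_nonempty ι with
  | inl _ => exact ⟨1, one_pos, fun x hx => (hpos x hx).elim fun i => isEmptyElim i⟩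
  | inr _ =>
    obtain ⟨ε, hε, h⟩ := hK.exists_forall_le' (a := 0)
      (f := fun x => Finset.univ.sup' Finset.univ_nonempty (F x))
      (Continuous.finset_sup'_apply _ fun i _ => (continuous_apply i).comp hF).continuousOn
      fun x hx => by simpa using hpos x hx
    exact ⟨ε, hε, fun x hx => by simpa using h x hx⟩

variable {W ι E : Type*}

lemma exists_pos_forall_exists_le_of_injective [Finite W] [Finite ι] [MetricSpace E]
    {K : Set (W → E)} (hK : IsCompact K) {Φ : (W → E) → ι → W → ℝ} (hΦ : Continuous Φ)
    (hpos : ∀ x ∈ K, Function.Injective x → ∃ i k, 0 < Φ x i k) {ε : ℝ} (hε : 0 < ε) :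
    ∃ ε' > 0, ∀ x ∈ K, (∀ i j, i ≠ j → ε ≤ dist (x i) (x j)) → ∃ i k, ε' ≤ Φ x i k := by
  have hclosed : IsClosed {x : W → E | ∀ i j, i ≠ j → ε ≤ dist (x i) (x j)} := by
    simp only [Set.ofPred_forall]
    exact isClosed_iInter fun i => isClosed_iInter fun j => isClosed_iInter fun _ =>
      isClosed_le continuous_const (by fun_prop)
  obtain ⟨ε', hε', h⟩ := exists_pos_forall_exists_le_of_isCompact (hK.inter_right hclosed)
    (F := fun x (e : ι × W) => Φ x e.1 e.2) (by fun_prop) fun x hx => by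
      have hinj : Function.Injective x := fun i j hij => by
        by_contra hne
        exact (hε.trans_le (hx.2 i j hne)).ne' (dist_eq_zero.2 hij)
      obtain ⟨i, k, hik⟩ := hpos x hx.1 hinj
      exact ⟨(i, k), hik⟩
  exact ⟨ε', hε', fun x hx hsep => by simpa using h x ⟨hx, hsep⟩⟩

lemma exists_notMem_largeSet_of_dist_lt [Fintype W] [Nonempty W] [Fintype ι]
    {Φ : (W → E) → ι → W → ℝ} {ε' : ℝ} {l : List (W → E)} {x₀ : W → E} {i : ι}
    (hsum : ∑ k, Φ x₀ i k = 0) (hl : ∀ x ∈ l, dist (Φ x) (Φ x₀) < ε') :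
    ∃ k, k ∉ largeSet Φ ε' l i := by
  by_contra! hall
  refine (Finset.sum_pos (fun k _ => ?_) Finset.univ_nonempty).ne' hsum
  obtain ⟨x, hx, hxk⟩ := hall k
  have hdist : dist (Φ x i k) (Φ x₀ i k) < ε' :=
    ((dist_le_pi_dist _ _ k).trans (dist_le_pi_dist _ _ i)).trans_lt (hl x hx)
  rw [Real.dist_eq, abs_lt] at hdist
  linarith

lemma not_reachable_nearGraph_of_card_mul_lt_dist [Fintype W] [PseudoMetricSpace E] {ε : ℝ}
    (hε : 0 ≤ ε) {l : List (W → E)} {x₀ : W → E} (hl : ∀ x ∈ l, dist x x₀ < ε) {i j : W}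
    (hij : Nat.card W * (3 * ε) < dist (x₀ i) (x₀ j)) : ¬ (nearGraph ε l).Reachable i j := by
  refine fun hreach => hij.not_ge (dist_le_card_mul_of_reachable (by positivity) ?_ hreach)
  intro a b hab
  obtain ⟨-, x, hx, hxab⟩ := nearGraph_adj.1 hab
  have ha := (dist_le_pi_dist x x₀ a).trans_lt (hl x hx)
  have hb := (dist_le_pi_dist x x₀ b).trans_lt (hl x hx)
  rw [dist_comm] at ha
  linarith [dist_triangle4 (x₀ a) (x a) (x b) (x₀ b)]

theorem exists_forall_smallIn_isAdmissible [Fintype W] [Nonempty W] [Finite ι] [MetricSpace E]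
    {K : Set (W → E)} (hK : IsCompact K) (hconst : ∀ x ∈ K, ∃ i j, x i ≠ x j)
    {Φ : (W → E) → ι → W → ℝ} (hΦ : Continuous Φ) (hsum : ∀ x ∈ K, ∀ i, ∑ k, Φ x i k = 0)
    (hne : ∀ x ∈ K, Function.Injective x → ∃ i k, Φ x i k ≠ 0) :
    ∃ ε ε' δ, 0 < δ ∧ ∀ l ≠ [], WordChain.SmallIn K δ l → IsAdmissible Φ ε ε' l := by
  have := Fintype.ofFinite ι
  obtain ⟨η, hη, hfar⟩ := exists_pos_forall_exists_le_of_isCompact hK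
    (F := fun x (e : W × W) => dist (x e.1) (x e.2)) (by fun_prop) fun x hx => by
      simpa using hconst x hx
  have hW : 0 < Nat.card W := Nat.card_pos
  obtain ⟨ε, hε, hεη⟩ : ∃ ε > 0, Nat.card W * (3 * ε) < η :=
    ⟨η / (4 * Nat.card W), by positivity, by field_simp; linarith⟩
  obtain ⟨ε', hε', hlarge⟩ := exists_pos_forall_exists_le_of_injective hK hΦ
    (fun x hx hinj => by
      obtain ⟨i, k, hik⟩ := hne x hx hinj
      obtain ⟨k', -, hk'⟩ := Finset.exists_pos_of_sum_zero_of_exists_nonzero _ (hsum x hx i)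
        ⟨k, Finset.mem_univ k, hik⟩
      exact ⟨i, k', hk'⟩) hε
  obtain ⟨δ, hδ, hunif⟩ := Metric.uniformContinuousOn_iff.1
    (hK.uniformContinuousOn_of_continuous hΦ.continuousOn) ε' hε'
  refine ⟨ε, ε', min δ ε, lt_min hδ hε, fun l hl ⟨hlK, hlδ⟩ => ?_⟩
  obtain ⟨x₀, hx₀⟩ := List.exists_mem_of_ne_nil l hl
  refine ⟨fun i => ?_, ?_, ?_⟩
  · exact exists_notMem_largeSet_of_dist_lt (hsum x₀ (hlK x₀ hx₀) i) fun x hx =>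
      hunif x (hlK x hx) x₀ (hlK x₀ hx₀) ((hlδ x hx x₀ hx₀).trans_le (min_le_left _ _))
  · obtain ⟨⟨i, j⟩, hij⟩ := hfar x₀ (hlK x₀ hx₀)
    exact ⟨i, j, not_reachable_nearGraph_of_card_mul_lt_dist hε.le
      (fun x hx => (hlδ x hx x₀ hx₀).trans_le (min_le_right _ _)) (hεη.trans_le hij)⟩
  · by_cases hsep : ∀ i j, i ≠ j → ε ≤ dist (x₀ i) (x₀ j)
    · obtain ⟨i, k, hik⟩ := hlarge x₀ (hlK x₀ hx₀) hsep
      exact .inl ⟨i, k, x₀, hx₀, hik⟩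
    · push Not at hsep
      obtain ⟨i, j, hij, hlt⟩ := hsep
      exact .inr ⟨i, j, hij, (nearGraph_adj.2 ⟨hij, x₀, hx₀, hlt⟩).reachable⟩

end Compactness

section CyclicShift

variable {p d : ℕ} [NeZero p]

/-- The cyclic shift of tuples of points of `ℝᵈ`, as a linear isometry for the sup norm. -/
def cyclicShift (p d : ℕ) [NeZero p] : (ZMod p → Fin d → ℝ) →ₗᵢ[ℝ] ZMod p → Fin d → ℝ where
  toLinearMap := LinearMap.funLeft ℝ (Fin d → ℝ) (· - 1)
  norm_map' x := by
    refine le_antisymm ((pi_norm_le_iff_of_nonneg (norm_nonneg x)).2 fun k => norm_le_pi_norm x _)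
      ((pi_norm_le_iff_of_nonneg (norm_nonneg _)).2 fun k => ?_)
    have h : ‖x (k + 1 - 1)‖ ≤ ‖LinearMap.funLeft ℝ (Fin d → ℝ) (· - 1) x‖ :=
      norm_le_pi_norm (LinearMap.funLeft ℝ (Fin d → ℝ) (· - 1) x) (k + 1)
    rwa [add_sub_cancel_right] at h

lemma cyclicShift_apply (x : ZMod p → Fin d → ℝ) (k : ZMod p) :
    cyclicShift p d x k = x (k - 1) := rfl

lemma cyclicShift_iterate_apply (n : ℕ) (x : ZMod p → Fin d → ℝ) (k : ZMod p) :
    (cyclicShift p d)^[n] x k = x (k - n) := by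
  induction n generalizing k with
  | zero => simp
  | succ n ih =>
    rw [Function.iterate_succ_apply', cyclicShift_apply, ih, Nat.cast_succ, sub_sub,
      add_comm (n : ZMod p)]

lemma cyclicShift_iterate_self : (cyclicShift p d)^[p] = id := by
  ext x k
  simp [cyclicShift_iterate_apply]

/-- The tuple with the basis vector `e_{m / (p - 1)}` in position `0` and zeros elsewhere. The join
of the shift orbits of the first `d * (p - 1)` of them consists of `p`-tuples of points of the
standard simplex; each block of `p - 1` consecutive tuples has the same orbit. -/
def joinVertex (p d m : ℕ) (k : ZMod p) (j : Fin d) : ℝ :=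
  if k = 0 ∧ m / (p - 1) = j then 1 else 0

lemma cyclicShift_iterate_joinVertex (n m : ℕ) (k : ZMod p) (j : Fin d) :
    (cyclicShift p d)^[n] (joinVertex p d m) k j = if k = n ∧ m / (p - 1) = j then 1 else 0 := by
  simp [cyclicShift_iterate_apply, joinVertex, sub_eq_zero]

lemma sum_iterate_joinVertex (n : ℕ) {m : ℕ} (hm : m / (p - 1) < d) :
    ∑ k, ∑ j, (cyclicShift p d)^[n] (joinVertex p d m) k j = 1 := by
  have hj (j : Fin d) : m / (p - 1) = j ↔ ⟨m / (p - 1), hm⟩ = j := by rw [Fin.ext_iff]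
  simp [cyclicShift_iterate_joinVertex, ite_and, hj]

variable [Fact (1 < p)]

lemma exists_forall_iterate_joinVertex_eq_zero (a : ℕ → ℕ) (j : Fin d) :
    ∃ k, ∀ m, (cyclicShift p d)^[a m] (joinVertex p d m) k j = 0 := by
  have hp := (Fact.out : 1 < p)
  let used := (Finset.range (p - 1)).image fun i => (a (j * (p - 1) + i) : ZMod p)
  have hcard : used.card < (Finset.univ : Finset (ZMod p)).card := by
    refine Finset.card_image_le.trans_lt ?_
    rw [Finset.card_range, Finset.card_univ, ZMod.card]
    omega
  obtain ⟨k, -, hk⟩ := Finset.exists_mem_notMem_of_card_lt_card hcard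
  refine ⟨k, fun m => ?_⟩
  rw [cyclicShift_iterate_joinVertex, if_neg]
  rintro ⟨rfl, hm⟩
  refine hk (Finset.mem_image.2 ⟨m % (p - 1), Finset.mem_range.2 (Nat.mod_lt _ (by omega)), ?_⟩)
  rw [← hm, Nat.div_add_mod']

lemma exists_ne_of_mem_orbitJoin {N : ℕ} (hN : N < d * (p - 1)) {x : ZMod p → Fin d → ℝ}
    (hx : x ∈ WordChain.orbitJoin (cyclicShift p d) (joinVertex p d) N) : ∃ i j, x i ≠ x j := by
  have hp : 0 < p - 1 := Nat.sub_pos_of_lt (Fact.out : 1 < p)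
  obtain ⟨a, ha⟩ := Set.mem_iUnion.1 hx
  choose κ hκ using exists_forall_iterate_joinVertex_eq_zero (p := p) (d := d) a
  have hsum : ∑ k, ∑ j, x k j = 1 := by
    refine convexHull_min (t := {y : ZMod p → Fin d → ℝ | ∑ k, ∑ j, y k j = 1}) ?_ ?_ ha
    · rintro _ ⟨m, hm, rfl⟩
      exact sum_iterate_joinVertex _ ((Nat.div_lt_iff_lt_mul hp).2 (lt_of_le_of_lt hm hN))
    · intro y hy z hz s t _ _ hst
      simp_all [Finset.sum_add_distrib, ← Finset.mul_sum]
  have hzero (j : Fin d) : x (κ j) j = 0 := by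
    refine convexHull_min (t := {y : ZMod p → Fin d → ℝ | y (κ j) j = 0}) ?_ ?_ ha
    · rintro _ ⟨m, -, rfl⟩
      exact hκ j m
    · intro y hy z hz s t _ _ _
      simp_all
  by_contra! hconst
  have hx0 (k : ZMod p) (j : Fin d) : x k j = 0 := by rw [hconst k (κ j), hzero]
  simp [hx0] at hsum

end CyclicShift

section Configuration

open WordChain

variable {p d : ℕ} [Fact p.Prime]

theorem exists_injective_forall_eq_zero {ι : Type*} [Fintype ι] (hd : Fintype.card ι < d)
    {Φ : (ZMod p → Fin d → ℝ) → ι → ZMod p → ℝ} (hΦ : Continuous Φ)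
    (hsum : ∀ x i, ∑ k, Φ x i k = 0)
    (hshift : ∀ x i k, Φ (cyclicShift p d x) i k = Φ x i (k - 1)) :
    ∃ x, Function.Injective x ∧ ∀ i k, Φ x i k = 0 := by
  by_contra! hne
  have hp := (Fact.out : p.Prime).one_lt
  have hmul : Fintype.card ι * (p - 1) + (p - 1) ≤ d * (p - 1) :=
    Nat.succ_mul _ _ ▸ Nat.mul_le_mul_right (p - 1) hd
  obtain ⟨ε, ε', δ, hδ, hadm⟩ := exists_forall_smallIn_isAdmissible
    (isCompact_orbitJoin (N := d * (p - 1) - 1) hp.le cyclicShift_iterate_self (joinVertex p d))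
    (fun x hx => exists_ne_of_mem_orbitJoin (by omega) hx) hΦ (fun x _ => hsum x)
    (fun x _ => hne x)
  open scoped Pointwise in
  obtain ⟨l, hl, hsmall, hlt⟩ := exists_smallIn_lt_rank (q := tupleLabel Φ ε ε')
    (rk := tupleRank Φ ε ε') cyclicShift_iterate_self hδ
    (tupleLabel_map_of_apply_sub_one cyclicShift_apply hshift)
    (fun l hl hsmall _ => (hadm l hl hsmall).eq_zero_of_vadd_tupleLabel)
    (fun l hl hsmall => (hadm l hl hsmall).tupleRank_pos)
    (fun l' l h => tupleRank_lt h.subset)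
  have hle := (hadm l hl hsmall).tupleRank_le
  rw [Nat.card_zmod] at hle
  omega

theorem exists_injective_forall_comp_add_eq {ι : Type*} [Fintype ι] (hd : Fintype.card ι < d)
    {f : ι → (ZMod p → Fin d → ℝ) → ℝ} (hf : ∀ i, Continuous (f i)) :
    ∃ x, Function.Injective x ∧ ∀ i k, f i (fun j => x (j + k)) = f i x := by
  let Φ (x : ZMod p → Fin d → ℝ) (i : ι) (k : ZMod p) : ℝ :=
    p * f i (fun j => x (j + k)) - ∑ t, f i fun j => x (j + t)
  have hΦ : Continuous Φ := by fun_prop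
  have hp : (p : ℝ) ≠ 0 := by exact_mod_cast (Fact.out : p.Prime).ne_zero
  obtain ⟨x, hx, hzero⟩ := exists_injective_forall_eq_zero hd hΦ
    (fun x i => by simp [Φ, ← Finset.mul_sum]) fun x i k => by
      have hsum := (Equiv.subRight (1 : ZMod p)).sum_comp fun t => f i fun j => x (j + t)
      simpa [Φ, cyclicShift_apply, add_sub_assoc] using hsum
  refine ⟨x, hx, fun i k => mul_left_cancel₀ hp ?_⟩
  have hzero0 : Φ x i 0 = 0 := hzero i 0
  simp only [Φ, add_zero] at hzero0
  linarith [show Φ x i k = 0 from hzero i k]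

variable {E : Type*} [AddCommGroup E] [Module ℝ E] [TopologicalSpace E] [ContinuousAdd E]
  [ContinuousSMul ℝ E] {ι : Type*} [Fintype ι]

theorem exists_injective_forall_comp_add_eq_of_card_lt_rank
    (hE : (Fintype.card ι : Cardinal) < Module.rank ℝ E) {f : ι → (ZMod p → E) → ℝ}
    (hf : ∀ i, Continuous (f i)) :
    ∃ x, Function.Injective x ∧ ∀ i k, f i (fun j => x (j + k)) = f i x := by
  obtain ⟨L, hL⟩ := (Module.le_rank_iff_exists_linearMap (n := Fintype.card ι + 1)).1
    (by simpa using Order.succ_le_of_lt hE)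
  have hLc : Continuous L := L.continuous_on_pi
  obtain ⟨x, hx, h⟩ := exists_injective_forall_comp_add_eq (p := p) (Nat.lt_succ_self _)
    (f := fun i x => f i fun j => L (x j)) fun i => by fun_prop
  exact ⟨fun k => L (x k), hL.comp hx, h⟩

end Configuration

theorem exists_r_equilateral_pgon_general {p : ℕ} [Fact p.Prime] {E : Type*} [AddCommGroup E]
    [Module ℝ E] [TopologicalSpace E] [ContinuousAdd E] [ContinuousSMul ℝ E] {ι : Type*}
    [Fintype ι] (hE : (Fintype.card ι : Cardinal) < Module.rank ℝ E) {ρ : ι → E → E → ℝ}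
    (hρ : ∀ i, Continuous fun e : E × E => ρ i e.1 e.2) :
    ∃ x : ZMod p → E, Function.Injective x ∧
      ∀ i k, ρ i (x k) (x (k + 1)) = ρ i (x 0) (x 1) := by
  obtain ⟨x, hx, h⟩ := exists_injective_forall_comp_add_eq_of_card_lt_rank (p := p) hE
    (f := fun i x => ρ i (x 0) (x 1)) fun i =>
      (hρ i).comp₂ (continuous_apply 0) (continuous_apply 1)
  exact ⟨x, hx, fun i k => by simpa [add_comm] using h i k⟩

namespace IsMetricEquivToStd

variable {E : Type*} [TopologicalSpace E] {ρ : E → E → ℝ}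

/-- The metric space structure given by `ρ`; its topology is definitionally the given one. -/
abbrev metricSpace (h : IsMetricEquivToStd ρ) : MetricSpace E :=
  MetricSpace.ofDistTopology ρ (fun x => (h.2.1 x x).2 rfl) h.1 h.2.2.1
    (fun s => by simpa [Set.subset_def] using h.2.2.2 s) fun x y => (h.2.1 x y).1

lemma continuous_s3 (h : IsMetricEquivToStd ρ) : Continuous fun e : E × E => ρ e.1 e.2 :=
  letI := h.metricSpace
  continuous_dist

lemma pos (h : IsMetricEquivToStd ρ) {x y : E} (hxy : x ≠ y) : 0 < ρ x y :=
  letI := h.metricSpace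
  dist_pos.2 hxy

end IsMetricEquivToStd

/-- Corollary: existence of an `r`-equilateral `p`-gon in `ℝᵈ` with respect to
`r` metrics equivalent to the Euclidean metric, provided `d > r`. -/
theorem exists_r_equilateral_pgon
    (p d r : ℕ) (hp : p.Prime) (hodd : Odd p) (hd : 0 < d) (hr : 0 < r) (hdr : d > r)
    (ρ : Fin r → EuclideanSpace ℝ (Fin d) → EuclideanSpace ℝ (Fin d) → ℝ)
    (hρ : ∀ i, IsMetricEquivToStd (ρ i)) :
    ∃ x : ZMod p → EuclideanSpace ℝ (Fin d),
      Function.Injective x ∧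
      ∀ i : Fin r, ∃ c : ℝ, 0 < c ∧ ∀ k : ZMod p, ρ i (x k) (x (k + 1)) = c := by
  have : Fact p.Prime := ⟨hp⟩
  obtain ⟨x, hx, h⟩ := exists_r_equilateral_pgon_general (p := p)
    (by simpa [← Module.finrank_eq_rank] using hdr)
    fun i => (hρ i).continuous_s3
  exact ⟨x, hx, fun i => ⟨_, (hρ i).pos (hx.ne zero_ne_one), h i⟩⟩
end
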